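/- arXiv:2407.05296 — 2 statements merged into one kernel-verified Lean document; each statement's English description precedes it below -/
import Mathlib

section
/- Let I be an ideal of bounded operators on H that is not contained in the trace class L₁, and let φ be a positive trace on I. If 0 ≤ S, T ∈ I are such that μ(n,S) ~ μ(n,T) as n → ∞ (i.e. μ(n,S) = μ(n,T) + o(μ(n,T))), then φ(S) = φ(T). -/
/-!
If `I` contains the identity, then two isometries with `U U* + V V* = 1` give `φ 1 = 2 φ 1`, so `φ`
vanishes on positive operators. Otherwise the singular values of every `A ∈ I` tend to zero: if
they were bounded below, some `B A C` would be an invertible diagonal operator. Hence `S` and `T`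
are compact, and conjugating them by isometries replaces them, without changing `φ`, by the diagonal
operators with entries `μ(n, S)` and `μ(n, T)` in a fixed basis.

All rank-one projections have the same trace `t`. As `I ⊄ L₁`, some positive diagonal operator
`D ∈ I` has entries with divergent sum, and comparing `D` with its finite truncations bounds the
partial sums times `t` by `φ D`; so `t = 0`. Therefore altering finitely many entries of a diagonal
operator does not change `φ`. For every `c > 1` one has `μ(n, S) ≤ c μ(n, T)` for all but finitely
many `n`, hence `φ S ≤ c φ T`. Let `c → 1`, and exchange `S` and `T`.
-/

open MeasureTheory Filter Topology
open scoped ENNReal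

noncomputable section

variable {H : Type*} [NormedAddCommGroup H] [InnerProductSpace ℂ H] [CompleteSpace H]

/-- `sv T n`: the `n`-th singular value of a (bounded) operator `T`, i.e. the distance in
operator norm from `T` to the operators of rank at most `n`. -/
def sv (T : H →L[ℂ] H) (n : ℕ) : ℝ :=
  sInf {r : ℝ | ∃ F : H →L[ℂ] H,
    LinearMap.rank (F : H →ₗ[ℂ] H) ≤ (n : Cardinal) ∧ ‖T - F‖ = r}

/-- `lam` is *the* eigenvalue sequence of `T`: moduli are non-increasing and every nonzero
value `z` occurs exactly as many times as its algebraic multiplicity, i.e. the dimension of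
the generalized eigenspace of `T` at `z` (this also forces padding by zeros when `T` has
only finitely many nonzero eigenvalues). -/
def IsEigenvalueSeq (T : H →L[ℂ] H) (lam : ℕ → ℂ) : Prop :=
  Antitone (fun n => ‖lam n‖) ∧
  ∀ z : ℂ, z ≠ 0 →
    {n : ℕ | lam n = z}.Finite ∧
      Nat.card {n : ℕ | lam n = z} =
        Module.finrank ℂ (Module.End.maxGenEigenspace (↑T : H →ₗ[ℂ] H) z)

section Diagonal

variable {ι 𝕜 E : Type*} [RCLike 𝕜] [NormedAddCommGroup E] [InnerProductSpace 𝕜 E]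
  {e : HilbertBasis ι 𝕜 E} {D D' : E →L[𝕜] E} {d d' : ι → ℝ}

theorem eq_of_forall_apply_hilbertBasis_eq {F : Type*} [NormedAddCommGroup F] [NormedSpace 𝕜 F]
    (e : HilbertBasis ι 𝕜 E) {A B : E →L[𝕜] F} (h : ∀ i, A (e i) = B (e i)) : A = B :=
  ContinuousLinearMap.ext_on (Submodule.dense_iff_topologicalClosure_eq_top.2 e.dense_span)
    (Set.forall_mem_range.2 h)

theorem eq_of_forall_inner_hilbertBasis_eq (e : HilbertBasis ι 𝕜 E) {x y : E}
    (h : ∀ i, inner 𝕜 (e i) x = inner 𝕜 (e i) y) : x = y :=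
  e.repr.injective <| lp.ext <| funext fun i ↦ by simpa only [e.repr_apply_apply] using h i

theorem star_apply_hilbertBasis_eq [CompleteSpace E] {U : E →L[𝕜] E} {f : ι → ι}
    (hf : Function.Injective f) (hU : ∀ i, U (e i) = e (f i)) (i : ι) :
    star U (e (f i)) = e i := by
  classical
  refine eq_of_forall_inner_hilbertBasis_eq e fun j ↦ ?_
  simp [ContinuousLinearMap.star_eq_adjoint, ContinuousLinearMap.adjoint_inner_right, hU,
    orthonormal_iff_ite.1 e.orthonormal, hf.eq_iff]

theorem star_apply_hilbertBasis_eq_zero [CompleteSpace E] {U : E →L[𝕜] E} {f : ι → ι}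
    (hU : ∀ i, U (e i) = e (f i)) {k : ι} (hk : k ∉ Set.range f) : star U (e k) = 0 := by
  refine eq_of_forall_inner_hilbertBasis_eq e fun j ↦ ?_
  rw [ContinuousLinearMap.star_eq_adjoint, ContinuousLinearMap.adjoint_inner_right, hU,
    e.orthonormal.inner_eq_zero fun h ↦ hk ⟨j, h⟩, inner_zero_right]

/-- `IsDiagonal e D d`: the operator `D` is diagonal with respect to the Hilbert basis `e`, with
real diagonal entries `d`. -/
def IsDiagonal (e : HilbertBasis ι 𝕜 E) (D : E →L[𝕜] E) (d : ι → ℝ) : Prop :=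
  ∀ i, D (e i) = (d i : 𝕜) • e i

namespace IsDiagonal

theorem eq (hD : IsDiagonal e D d) (hD' : IsDiagonal e D' d) : D = D' :=
  eq_of_forall_apply_hilbertBasis_eq e fun i ↦ (hD i).trans (hD' i).symm

theorem one (e : HilbertBasis ι 𝕜 E) : IsDiagonal e (1 : E →L[𝕜] E) 1 := fun i ↦ by simp

theorem add (hD : IsDiagonal e D d) (hD' : IsDiagonal e D' d') :
    IsDiagonal e (D + D') (d + d') := fun i ↦ by
  simp [hD i, hD' i, add_smul]

theorem sub (hD : IsDiagonal e D d) (hD' : IsDiagonal e D' d') :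
    IsDiagonal e (D - D') (d - d') := fun i ↦ by
  simp [hD i, hD' i, sub_smul]

theorem smul (c : ℝ) (hD : IsDiagonal e D d) : IsDiagonal e ((c : 𝕜) • D) (c • d) :=
  fun i ↦ by simp [hD i, smul_smul]

theorem mul_star [CompleteSpace E] {U : E →L[𝕜] E} {f : ι → ι} (hf : Function.Injective f)
    (hU : ∀ i, U (e i) = e (f i)) :
    IsDiagonal e (U * star U) ((Set.range f).indicator 1) := fun k ↦ by
  by_cases hk : k ∈ Set.range f
  · obtain ⟨i, rfl⟩ := hk
    simp [star_apply_hilbertBasis_eq hf hU, hU]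
  · simp [star_apply_hilbertBasis_eq_zero hU hk, hk]

theorem sum_rankOne [DecidableEq ι] (e : HilbertBasis ι 𝕜 E) (s : Finset ι) (c : ι → ℝ) :
    IsDiagonal e (∑ i ∈ s, (c i : 𝕜) • InnerProductSpace.rankOne 𝕜 (e i) (e i))
      (fun i ↦ if i ∈ s then c i else 0) := fun j ↦ by
  simp only [sum_apply, smul_apply, InnerProductSpace.rankOne_apply,
    orthonormal_iff_ite.1 e.orthonormal, ite_smul, one_smul, zero_smul, smul_ite, smul_zero,
    Finset.sum_ite_eq']
  split_ifs <;> simp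

theorem inner_apply (hD : IsDiagonal e D d) (i : ι) (x : E) :
    inner 𝕜 (e i) (D x) = d i * inner 𝕜 (e i) x := by
  classical
  suffices (innerSL 𝕜 (e i)).comp D = (d i : 𝕜) • innerSL 𝕜 (e i) by
    simpa using congr($this x)
  refine eq_of_forall_apply_hilbertBasis_eq e fun j ↦ ?_
  rcases eq_or_ne i j with rfl | hij <;>
    simp [hD _, orthonormal_iff_ite.1 e.orthonormal, *]

theorem hasSum_inner_apply (hD : IsDiagonal e D d) (x y : E) :
    HasSum (fun i ↦ d i * (inner 𝕜 x (e i) * inner 𝕜 (e i) y)) (inner 𝕜 x (D y)) :=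
  (e.hasSum_inner_mul_inner x (D y)).congr_fun fun i ↦ by
    rw [hD.inner_apply, mul_left_comm]

theorem isPositive (hD : IsDiagonal e D d) (hd : 0 ≤ d) : D.IsPositive := by
  have symm : (D : E →ₗ[𝕜] E).IsSymmetric := fun x y ↦
    (e.hasSum_inner_mul_inner (D x) y).unique <| (hD.hasSum_inner_apply x y).congr_fun fun i ↦ by
      rw [← inner_conj_symm (D x), hD.inner_apply, map_mul, RCLike.conj_ofReal, inner_conj_symm,
        mul_assoc]
  refine ⟨symm, fun x ↦ ?_⟩
  have hsum := RCLike.hasSum_re 𝕜 (hD.hasSum_inner_apply x x)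
  rw [D.reApplyInnerSelf_apply, inner_re_symm]
  refine hsum.nonneg fun i ↦ ?_
  rw [RCLike.re_ofReal_mul, inner_mul_symm_re_eq_norm]
  exact mul_nonneg (hd i) (norm_nonneg _)

theorem le (hD : IsDiagonal e D d) (hD' : IsDiagonal e D' d') (h : d ≤ d') :
    D ≤ D' :=
  ContinuousLinearMap.le_def .. |>.2 <| (hD'.sub hD).isPositive (sub_nonneg.2 h)

theorem isUnit [CompleteSpace E] (hD : IsDiagonal e D d) {δ : ℝ} (hδ : 0 < δ)
    (hd : ∀ i, δ ≤ d i) : IsUnit D := by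
  refine D.isUnit_of_forall_le_norm_inner_map (c := ⟨δ, hδ.le⟩) hδ fun x ↦ ?_
  have hpos : (D - (δ : 𝕜) • 1).IsPositive :=
    (hD.sub ((one e).smul δ)).isPositive fun i ↦ by simpa using hd i
  calc ‖x‖ ^ 2 * δ ≤ RCLike.re (inner 𝕜 (D x) x) := by
        have := hpos.re_inner_nonneg_left x
        rw [sub_apply, smul_apply, one_apply_eq_self, inner_sub_left, map_sub, inner_smul_left,
          RCLike.conj_ofReal, RCLike.re_ofReal_mul, inner_self_eq_norm_sq] at this
        linarith
    _ ≤ ‖inner 𝕜 (D x) x‖ := RCLike.re_le_norm _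

end IsDiagonal

end Diagonal

section SingularValues

variable {E : Type*} [NormedAddCommGroup E] [InnerProductSpace ℂ E] {T : E →L[ℂ] E} {n : ℕ} {c : ℝ}

theorem le_sv (h : ∀ F : E →L[ℂ] E, LinearMap.rank (F : E →ₗ[ℂ] E) ≤ n → c ≤ ‖T - F‖) :
    c ≤ sv T n :=
  le_csInf ⟨_, 0, by simp [LinearMap.rank_zero], rfl⟩ fun _ ⟨F, hF, hr⟩ ↦ hr ▸ h F hF

theorem sv_nonneg (T : E →L[ℂ] E) (n : ℕ) : 0 ≤ sv T n := le_sv fun _ _ ↦ norm_nonneg _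

theorem sv_le_norm_sub {F : E →L[ℂ] E} (hF : LinearMap.rank (F : E →ₗ[ℂ] E) ≤ n) :
    sv T n ≤ ‖T - F‖ :=
  csInf_le ⟨0, fun _ ⟨_, _, hr⟩ ↦ hr ▸ norm_nonneg _⟩ ⟨F, hF, rfl⟩

theorem antitone_sv (T : E →L[ℂ] E) : Antitone (sv T) := fun _ _ hmn ↦
  le_sv fun _ hF ↦ sv_le_norm_sub (hF.trans (mod_cast hmn))

theorem sv_le_of_forall_mem_orthogonal {K : Submodule ℂ E} [FiniteDimensional ℂ K]
    (hK : Module.finrank ℂ K ≤ n) (hc : 0 ≤ c) (h : ∀ x ∈ Kᗮ, ‖T x‖ ≤ c * ‖x‖) : sv T n ≤ c := by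
  have hrank : LinearMap.rank ((T ∘L K.starProjection : E →L[ℂ] E) : E →ₗ[ℂ] E) ≤ n :=
    calc LinearMap.rank ((T ∘L K.starProjection : E →L[ℂ] E) : E →ₗ[ℂ] E)
      _ ≤ LinearMap.rank (K.starProjection : E →ₗ[ℂ] E) := LinearMap.rank_comp_le_right _ _
      _ = Module.rank ℂ K := by rw [LinearMap.rank, K.range_starProjection]
      _ = Module.finrank ℂ K := (Module.finrank_eq_rank ℂ K).symm
      _ ≤ n := mod_cast hK
  refine (sv_le_norm_sub hrank).trans (ContinuousLinearMap.opNorm_le_bound _ hc fun x ↦ ?_)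
  calc ‖(T - T ∘L K.starProjection) x‖ = ‖T (Kᗮ.starProjection x)‖ := by
        simp [Submodule.starProjection_orthogonal]
    _ ≤ c * ‖Kᗮ.starProjection x‖ := h _ (Submodule.starProjection_apply_mem _ _)
    _ ≤ c * ‖x‖ := by gcongr; exact Submodule.norm_starProjection_apply_le _ _

theorem le_sv_of_forall_mem {K : Submodule ℂ E} [FiniteDimensional ℂ K]
    (hK : n < Module.finrank ℂ K) (h : ∀ x ∈ K, c * ‖x‖ ≤ ‖T x‖) : c ≤ sv T n := by
  refine le_sv fun F hF ↦ ?_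
  have hker : LinearMap.ker ((F : E →ₗ[ℂ] E) ∘ₗ K.subtype) ≠ ⊥ := fun hbot ↦ hK.not_ge <| by
    rw [← Nat.cast_le (α := Cardinal), Module.finrank_eq_rank,
      ← rank_range_of_injective _ (LinearMap.ker_eq_bot.1 hbot)]
    exact (LinearMap.rank_comp_le_left _ _).trans hF
  obtain ⟨x, hFx, hx0⟩ := Submodule.exists_mem_ne_zero_of_ne_bot hker
  replace hFx : F x = 0 := hFx
  refine le_of_mul_le_mul_right ?_ (norm_pos_iff.2 hx0)
  calc c * ‖(x : E)‖ ≤ ‖T x‖ := h x x.2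
    _ = ‖(T - F) x‖ := by simp [hFx]
    _ ≤ ‖T - F‖ * ‖(x : E)‖ := (T - F).le_opNorm x

theorem isCompactOperator_of_rank_lt_aleph0 {F : E →L[ℂ] E}
    (hF : LinearMap.rank (F : E →ₗ[ℂ] E) < Cardinal.aleph0) : IsCompactOperator F := by
  have : FiniteDimensional ℂ F.range := Module.rank_lt_aleph0_iff.1 hF
  have : ProperSpace F.range := FiniteDimensional.proper ℂ _
  exact (isCompactOperator_of_locallyCompactSpace_dom F.rangeRestrict).clm_comp F.range.subtypeL

theorem isCompactOperator_of_tendsto_sv [CompleteSpace E] (hT : Tendsto (sv T) atTop (𝓝 0)) :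
    IsCompactOperator T := by
  refine isClosed_setOfPred_isCompactOperator.closure_subset
    (Metric.mem_closure_iff.2 fun ε hε ↦ ?_)
  obtain ⟨n, hn⟩ := (hT.eventually_lt_const hε).exists
  by_contra! h
  refine hn.not_ge (le_sv fun F hF ↦ ?_)
  rw [← dist_eq_norm]
  exact h F (isCompactOperator_of_rank_lt_aleph0 (hF.trans_lt (Cardinal.natCast_lt_aleph0)))

end SingularValues

section GreedySequence

theorem exists_seq_forall_of_forall_finset {α : Type*} [DecidableEq α] {P : α → Prop}
    {R : Finset α → α → Prop} (h : ∀ s : Finset α, (∀ x ∈ s, P x) → ∃ y, P y ∧ R s y) :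
    ∃ f : ℕ → α, ∀ n, P (f n) ∧ R ((Finset.range n).image f) (f n) := by
  have : Nonempty α := let ⟨y, _⟩ := h ∅ (by simp); ⟨y⟩
  choose! y hP hR using h
  let F : ℕ → Finset α := Nat.rec ∅ fun _ s ↦ insert (y s) s
  have hF : ∀ n, ∀ x ∈ F n, P x := fun n ↦ by
    induction n with
    | zero => simp [F]
    | succ n ih => simpa [F] using ⟨hP _ ih, ih⟩
  have hF_eq : ∀ n, (Finset.range n).image (fun n ↦ y (F n)) = F n := fun n ↦ by
    induction n with
    | zero => rfl
    | succ n ih => rw [Finset.range_add_one, Finset.image_insert, ih]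
  exact ⟨fun n ↦ y (F n), fun n ↦ ⟨hP _ (hF n), (hF_eq n).symm ▸ hR _ (hF n)⟩⟩

end GreedySequence

section Orthogonality

variable {𝕜 E ι : Type*} [RCLike 𝕜] [NormedAddCommGroup E] [InnerProductSpace 𝕜 E]

theorem mem_orthogonal_span_iff {s : Set E} {x : E} :
    x ∈ (Submodule.span 𝕜 s)ᗮ ↔ ∀ z ∈ s, inner 𝕜 z x = 0 := by
  rw [← Submodule.span_singleton_le_iff_mem, ← Submodule.isOrtho_iff_le, Submodule.isOrtho_comm,
    Submodule.isOrtho_span]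
  simp only [Set.mem_singleton_iff, forall_eq]

theorem orthonormal_of_forall_lt [LinearOrder ι] {v : ι → E} (hnorm : ∀ i, ‖v i‖ = 1)
    (horth : ∀ i j, i < j → inner 𝕜 (v i) (v j) = 0) : Orthonormal 𝕜 v :=
  ⟨hnorm, fun i j hij ↦ hij.lt_or_gt.elim (horth i j) fun h ↦ inner_eq_zero_symm.1 (horth j i h)⟩

theorem norm_sq_sum_smul_of_orthonormal {v : ι → E} (hv : Orthonormal 𝕜 v) (c : ι → 𝕜)
    (s : Finset ι) : ‖∑ i ∈ s, c i • v i‖ ^ 2 = ∑ i ∈ s, ‖c i‖ ^ 2 := by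
  simpa using hv.orthogonalFamily.norm_sum c s

theorem mul_norm_le_norm_apply_of_mem_span [Finite ι] {A : E →L[𝕜] E} {v : ι → E}
    (hv : Orthonormal 𝕜 v) {a : ι → 𝕜} (ha : ∀ i, A (v i) = a i • v i) {c : ℝ} (hc : 0 ≤ c)
    (hca : ∀ i, c ≤ ‖a i‖) {x : E} (hx : x ∈ Submodule.span 𝕜 (Set.range v)) :
    c * ‖x‖ ≤ ‖A x‖ := by
  have := Fintype.ofFinite ι
  obtain ⟨b, rfl⟩ := (Submodule.mem_span_range_iff_exists_fun 𝕜).1 hx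
  refine le_of_sq_le_sq ?_ (norm_nonneg _)
  simp only [map_sum, map_smul, ha, smul_smul, mul_pow, norm_sq_sum_smul_of_orthonormal hv,
    norm_mul, Finset.mul_sum]
  gcongr ∑ i, ?_ with i
  rw [mul_comm]
  gcongr
  exact hca i

theorem exists_linearIsometry_apply_hilbertBasis_eq {F : Type*} [NormedAddCommGroup F]
    [InnerProductSpace 𝕜 F] [CompleteSpace F] (e : HilbertBasis ι 𝕜 E) {u : ι → F}
    (hu : Orthonormal 𝕜 u) : ∃ U : E →ₗᵢ[𝕜] F, ∀ i, U (e i) = u i := by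
  classical
  exact ⟨hu.orthogonalFamily.linearIsometry.comp e.repr.toLinearIsometry, fun i ↦ by
    simp [e.repr_self, hu.orthogonalFamily.linearIsometry_apply_single]⟩

end Orthogonality

section SpectralDecomposition

variable {E : Type*} [NormedAddCommGroup E] [InnerProductSpace ℂ E] {A : E →L[ℂ] E}

theorem exists_norm_eq_one_apply_eq_norm_smul [CompleteSpace E] [Nontrivial E]
    (hA : A.IsPositive) (hcompact : IsCompactOperator A) : ∃ u, ‖u‖ = 1 ∧ A u = (‖A‖ : ℂ) • u := by
  rcases eq_or_ne A 0 with rfl | hA0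
  · simpa using exists_norm_eq E zero_le_one
  have hmem : (‖A‖ : ℂ) ∈ spectrum ℂ A :=
    spectrum.algebraMap_mem ℂ
      (CStarAlgebra.norm_mem_spectrum_of_nonneg (A.nonneg_iff_isPositive.2 hA))
  obtain ⟨v, hv⟩ := ((hcompact.hasEigenvalue_iff_mem_spectrum (by simpa using hA0)).2
    hmem).exists_hasEigenvector
  refine ⟨(‖v‖⁻¹ : ℂ) • v, norm_smul_inv_norm hv.2, ?_⟩
  have : A v = (‖A‖ : ℂ) • v := hv.apply_eq_smul
  rw [map_smul, this, smul_comm]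

theorem exists_mem_apply_eq_norm_smul (hA : A.IsPositive) (hcompact : IsCompactOperator A)
    {V : Submodule ℂ E} [CompleteSpace V] (hV : V ≠ ⊥) (hinv : ∀ x ∈ V, A x ∈ V) :
    ∃ u ∈ V, ‖u‖ = 1 ∧ A u = (‖A u‖ : ℂ) • u ∧ ∀ x ∈ V, ‖A x‖ ≤ ‖A u‖ * ‖x‖ := by
  have := Submodule.nontrivial_iff_ne_bot.2 hV
  let B : V →L[ℂ] V := V.orthogonalProjectionOnto ∘L A ∘L V.subtypeL
  have hB : ∀ x : V, (B x : E) = A x := fun x ↦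
    Submodule.starProjection_eq_self_iff.2 (hinv x x.2)
  have hBcompact : IsCompactOperator B :=
    (hcompact.comp_clm V.subtypeL).clm_comp V.orthogonalProjectionOnto
  obtain ⟨u, hu, hBu⟩ :=
    exists_norm_eq_one_apply_eq_norm_smul (hA.orthogonalProjectionOnto_comp V) hBcompact
  have hAu : A u = (‖B‖ : ℂ) • (u : E) := by rw [← hB, hBu, Submodule.coe_smul]
  have hnorm : ‖A u‖ = ‖B‖ := by
    rw [hAu, norm_smul, Complex.norm_of_nonneg (norm_nonneg B), ← V.coe_norm, hu, mul_one]
  refine ⟨u, u.2, hu, by rw [hnorm, hAu], fun x hx ↦ ?_⟩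
  rw [hnorm, ← hB ⟨x, hx⟩]
  exact B.le_opNorm ⟨x, hx⟩

theorem exists_orthonormal_apply_eq_norm_smul [CompleteSpace E]
    (hE : ¬ FiniteDimensional ℂ E) (hA : A.IsPositive) (hcompact : IsCompactOperator A) :
    ∃ u : ℕ → E, Orthonormal ℂ u ∧ (∀ n, A (u n) = (‖A (u n)‖ : ℂ) • u n) ∧
      ∀ n x, (∀ i < n, inner ℂ (u i) x = 0) → ‖A x‖ ≤ ‖A (u n)‖ * ‖x‖ := by
  classical
  have exists_next (s : Finset E) (hs : ∀ x ∈ s, ‖x‖ = 1 ∧ A x = (‖A x‖ : ℂ) • x) :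
      ∃ y, (‖y‖ = 1 ∧ A y = (‖A y‖ : ℂ) • y) ∧ (∀ z ∈ s, inner ℂ z y = 0) ∧
        ∀ x, (∀ z ∈ s, inner ℂ z x = 0) → ‖A x‖ ≤ ‖A y‖ * ‖x‖ := by
    let K := Submodule.span ℂ (s : Set E)
    have hK : Kᗮ ≠ ⊥ := fun h ↦ hE ⟨s, Submodule.orthogonal_eq_bot_iff.1 h⟩
    have hinv : ∀ x ∈ Kᗮ, A x ∈ Kᗮ := fun x hx ↦ mem_orthogonal_span_iff.2 fun z hz ↦ by
      rw [← hA.inner_left_eq_inner_right, (hs z hz).2, inner_smul_left,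
        mem_orthogonal_span_iff.1 hx z hz, mul_zero]
    obtain ⟨y, hy, hnorm, heig, hmax⟩ := exists_mem_apply_eq_norm_smul hA hcompact hK hinv
    exact ⟨y, ⟨hnorm, heig⟩, mem_orthogonal_span_iff.1 hy,
      fun x hx ↦ hmax x (mem_orthogonal_span_iff.2 hx)⟩
  obtain ⟨u, hu⟩ := exists_seq_forall_of_forall_finset exists_next
  simp only [Finset.forall_mem_image, Finset.mem_range] at hu
  exact ⟨u, orthonormal_of_forall_lt (fun n ↦ (hu n).1.1) fun i n hi ↦ (hu n).2.1 hi,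
    fun n ↦ (hu n).1.2, fun n x hx ↦ (hu n).2.2 x fun i hi ↦ hx i hi⟩

theorem sv_eq_norm_apply_of_orthonormal {u : ℕ → E} (hu : Orthonormal ℂ u)
    (heig : ∀ n, A (u n) = (‖A (u n)‖ : ℂ) • u n)
    (hmax : ∀ n x, (∀ i < n, inner ℂ (u i) x = 0) → ‖A x‖ ≤ ‖A (u n)‖ * ‖x‖) (n : ℕ) :
    sv A n = ‖A (u n)‖ := by
  have horth (m : ℕ) : Orthonormal ℂ fun i : Fin m ↦ u i := hu.comp _ Fin.val_injective
  let K (m : ℕ) := Submodule.span ℂ (Set.range fun i : Fin m ↦ u i)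
  have (m : ℕ) : FiniteDimensional ℂ (K m) := .span_of_finite ℂ (Set.finite_range _)
  have hfinrank (m : ℕ) : Module.finrank ℂ (K m) = m := by
    rw [finrank_span_eq_card (horth m).linearIndependent, Fintype.card_fin]
  apply le_antisymm
  · refine sv_le_of_forall_mem_orthogonal (hfinrank n).le (norm_nonneg _) fun x hx ↦ hmax n x ?_
    rw [mem_orthogonal_span_iff, Set.forall_mem_range] at hx
    exact fun i hi ↦ hx ⟨i, hi⟩
  · refine le_sv_of_forall_mem (n.lt_succ_self.trans_eq (hfinrank (n + 1)).symm) fun x hx ↦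
      mul_norm_le_norm_apply_of_mem_span (horth _) (heig ·) (norm_nonneg _) (fun i ↦ ?_) hx
    simpa [hu.1 n] using hmax i (u n) fun j hj ↦ hu.2 (hj.trans_le (Fin.is_le i)).ne

theorem exists_orthonormal_apply_eq_sv_smul [CompleteSpace E]
    (hE : ¬ FiniteDimensional ℂ E) (hA : A.IsPositive) (hsv : Tendsto (sv A) atTop (𝓝 0)) :
    ∃ u : ℕ → E, Orthonormal ℂ u ∧ (∀ n, A (u n) = (sv A n : ℂ) • u n) ∧
      ∀ x, (∀ n, inner ℂ (u n) x = 0) → A x = 0 := by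
  obtain ⟨u, hu, heig, hmax⟩ :=
    exists_orthonormal_apply_eq_norm_smul hE hA (isCompactOperator_of_tendsto_sv hsv)
  have hsv_eq := sv_eq_norm_apply_of_orthonormal hu heig hmax
  refine ⟨u, hu, fun n ↦ hsv_eq n ▸ heig n, fun x hx ↦ norm_le_zero_iff.1 ?_⟩
  refine ge_of_tendsto' (by simpa using hsv.mul_const ‖x‖) fun n ↦ ?_
  exact hsv_eq n ▸ hmax n x fun i _ ↦ hx i

theorem exists_isDiagonal_conj_sv [CompleteSpace E] (e : HilbertBasis ℕ ℂ E) (hA : A.IsPositive)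
    (hsv : Tendsto (sv A) atTop (𝓝 0)) :
    ∃ U : E →L[ℂ] E, A * U * star U = A ∧ IsDiagonal e (star U * A * U) (sv A) := by
  have hE : ¬ FiniteDimensional ℂ E := fun _ ↦
    Infinite.not_finite (e.orthonormal.linearIndependent.finite)
  obtain ⟨u, hu, heig, hker⟩ := exists_orthonormal_apply_eq_sv_smul hE hA hsv
  obtain ⟨W, hW⟩ := exists_linearIsometry_apply_hilbertBasis_eq e hu
  let U := W.toContinuousLinearMap
  have hU : ∀ x, U.adjoint (U x) = x := fun x ↦ congr($W.adjoint_comp_self x)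
  have hUe : ∀ n, U (e n) = u n := hW
  refine ⟨U, ?_, fun n ↦ ?_⟩
  · -- `x - U U* x` is orthogonal to the range of `U`, on whose complement `A` vanishes.
    ext x
    refine (sub_eq_zero.1 ?_).symm
    rw [mul_assoc, mul_apply_eq_comp, ← map_sub]
    refine hker _ fun n ↦ ?_
    rw [inner_sub_right, mul_apply_eq_comp, sub_eq_zero, ← hUe, ContinuousLinearMap.star_eq_adjoint,
      ← U.adjoint_inner_left, hU, U.adjoint_inner_right]
  · rw [mul_apply_eq_comp, mul_apply_eq_comp, hUe, heig, map_smul, ← hUe,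
      ContinuousLinearMap.star_eq_adjoint, hU]
    rfl

end SpectralDecomposition

section ApproximateSingularValueDecomposition

variable {E : Type*} [NormedAddCommGroup E] [InnerProductSpace ℂ E] {T : E →L[ℂ] E}

theorem exists_mem_orthogonal_lt_norm_apply {K : Submodule ℂ E} [FiniteDimensional ℂ K] {n : ℕ}
    (hK : Module.finrank ℂ K ≤ n) {c : ℝ} (hc : 0 ≤ c) (hcT : c < sv T n) :
    ∃ y ∈ Kᗮ, ‖y‖ = 1 ∧ c < ‖T y‖ := by
  by_contra! h
  refine hcT.not_ge (sv_le_of_forall_mem_orthogonal hK hc fun x hx ↦ ?_)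
  rcases eq_or_ne x 0 with rfl | hx0
  · simp
  have := h _ (Kᗮ.smul_mem (‖x‖⁻¹ : ℂ) hx) (norm_smul_inv_norm hx0)
  rwa [map_smul, norm_smul, norm_inv, Complex.norm_real, norm_norm,
    inv_mul_le_iff₀ (norm_pos_iff.2 hx0), mul_comm] at this

theorem exists_orthonormal_sv_half_le_norm_apply [CompleteSpace E] (hT : ∀ n, 0 < sv T n) :
    ∃ x : ℕ → E, Orthonormal ℂ x ∧ (∀ i j, i < j → inner ℂ (T (x i)) (T (x j)) = 0) ∧
      ∀ n, sv T (2 * n) / 2 ≤ ‖T (x n)‖ := by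
  classical
  -- The next vector is orthogonal to each previous `z` and to `T* T z`: this costs two dimensions
  -- per vector, whence the index `2 * n`.
  have exists_next (s : Finset E) : ∃ y, ‖y‖ = 1 ∧
      (∀ z ∈ s, inner ℂ z y = 0 ∧ inner ℂ (T z) (T y) = 0) ∧ sv T (2 * s.card) / 2 ≤ ‖T y‖ := by
    let s' := s ∪ s.image fun z ↦ T.adjoint (T z)
    have hcard : Module.finrank ℂ (Submodule.span ℂ (s' : Set E)) ≤ 2 * s.card :=
      calc Module.finrank ℂ (Submodule.span ℂ (s' : Set E)) ≤ s'.card :=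
            finrank_span_finset_le_card _
        _ ≤ s.card + (s.image fun z ↦ T.adjoint (T z)).card := Finset.card_union_le _ _
        _ ≤ 2 * s.card := by
          rw [two_mul]; exact Nat.add_le_add_left Finset.card_image_le _
    obtain ⟨y, hy, hnorm, hlt⟩ := exists_mem_orthogonal_lt_norm_apply hcard
      (half_pos (hT _)).le (half_lt_self (hT _))
    rw [mem_orthogonal_span_iff] at hy
    refine ⟨y, hnorm, fun z hz ↦ ⟨hy z (by simp [s', hz]), ?_⟩, hlt.le⟩
    rw [← T.adjoint_inner_left]
    exact hy _ (Finset.mem_union_right _ (Finset.mem_image_of_mem _ hz))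
  obtain ⟨x, hx⟩ :=
    exists_seq_forall_of_forall_finset (P := fun y : E ↦ ‖y‖ = 1) fun s _ ↦ exists_next s
  simp only [Finset.forall_mem_image, Finset.mem_range] at hx
  refine ⟨x, orthonormal_of_forall_lt (fun n ↦ (hx n).1) fun i n hi ↦ ((hx n).2.1 hi).1,
    fun i n hi ↦ ((hx n).2.1 hi).2, fun n ↦ le_trans ?_ (hx n).2.2⟩
  gcongr
  exact antitone_sv T (by simpa using Finset.card_image_le (s := Finset.range n) (f := x))

theorem exists_isDiagonal_sv_half_le [CompleteSpace E] (e : HilbertBasis ℕ ℂ E)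
    (hT : ∀ n, 0 < sv T n) :
    ∃ (B C : E →L[ℂ] E) (a : ℕ → ℝ), IsDiagonal e (B * T * C) a ∧ ∀ n, sv T (2 * n) / 2 ≤ a n := by
  obtain ⟨x, hx, hTx, hle⟩ := exists_orthonormal_sv_half_le_norm_apply hT
  have hpos : ∀ n, 0 < ‖T (x n)‖ := fun n ↦ (half_pos (hT _)).trans_le (hle n)
  have hy : Orthonormal ℂ fun n ↦ (‖T (x n)‖⁻¹ : ℂ) • T (x n) :=
    orthonormal_of_forall_lt (fun n ↦ norm_smul_inv_norm (norm_pos_iff.1 (hpos n)))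
      fun i j hij ↦ by rw [inner_smul_left, inner_smul_right, hTx i j hij, mul_zero, mul_zero]
  obtain ⟨U, hU⟩ := exists_linearIsometry_apply_hilbertBasis_eq e hx
  obtain ⟨W, hW⟩ := exists_linearIsometry_apply_hilbertBasis_eq e hy
  refine ⟨W.toContinuousLinearMap.adjoint, U.toContinuousLinearMap, fun n ↦ ‖T (x n)‖,
    fun n ↦ ?_, hle⟩
  have hTW : T (U (e n)) = (‖T (x n)‖ : ℂ) • W (e n) := by
    rw [hU, hW, smul_inv_smul₀ (by exact_mod_cast (hpos n).ne')]
  have hWW : W.toContinuousLinearMap.adjoint (W (e n)) = e n := congr($W.adjoint_comp_self (e n))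
  rw [mul_apply_eq_comp, mul_apply_eq_comp, LinearIsometry.coe_toContinuousLinearMap, hTW,
    map_smul, hWW]
  rfl

theorem tendsto_sv_zero_of_mem_twoSidedIdeal [CompleteSpace E] (e : HilbertBasis ℕ ℂ E)
    {J : TwoSidedIdeal (E →L[ℂ] E)} (hJ : 1 ∉ J) (hT : T ∈ J) : Tendsto (sv T) atTop (𝓝 0) := by
  refine tendsto_order.2 ⟨fun b hb ↦ .of_forall fun n ↦ hb.trans_le (sv_nonneg T n),
    fun δ hδ ↦ ?_⟩
  by_contra hev
  have hle : ∀ n, δ ≤ sv T n := fun n ↦ by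
    by_contra! hlt
    exact hev ((eventually_ge_atTop n).mono fun m hm ↦ (antitone_sv T hm).trans_lt hlt)
  obtain ⟨B, C, a, ha, hsv⟩ := exists_isDiagonal_sv_half_le e fun n ↦ hδ.trans_le (hle n)
  obtain ⟨R, hR⟩ := (ha.isUnit (half_pos hδ)
    fun n ↦ (by gcongr; exact hle _ : δ / 2 ≤ sv T (2 * n) / 2).trans (hsv n)).exists_right_inv
  exact hJ (hR ▸ J.mul_mem_right _ _ (J.mul_mem_right _ _ (J.mul_mem_left _ _ hT)))

theorem exists_mem_isDiagonal_not_summable [CompleteSpace E] (e : HilbertBasis ℕ ℂ E)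
    {J : TwoSidedIdeal (E →L[ℂ] E)} (hT : T ∈ J) (hsum : ¬ Summable (sv T)) :
    ∃ D ∈ J, ∃ a, 0 ≤ a ∧ ¬ Summable a ∧ IsDiagonal e D a := by
  have hpos : ∀ n, 0 < sv T n := fun n ↦ by
    by_contra! hn
    refine hsum (summable_of_ne_finset_zero (s := Finset.range n) fun m hm ↦ ?_)
    exact ((antitone_sv T (by simpa using hm)).trans hn).antisymm (sv_nonneg T m)
  obtain ⟨B, C, a, ha, hsv⟩ := exists_isDiagonal_sv_half_le e hpos
  refine ⟨_, J.mul_mem_right _ C (J.mul_mem_left B _ hT), a,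
    fun n ↦ (half_pos (hpos _)).le.trans (hsv n), fun hsum_a ↦ hsum ?_, ha⟩
  have heven : Summable fun n ↦ sv T (2 * n) :=
    (hsum_a.mul_left 2).of_nonneg_of_le (fun _ ↦ sv_nonneg T _) fun n ↦ by linarith [hsv n]
  have hodd : Summable fun n ↦ sv T (2 * n + 1) :=
    heven.of_nonneg_of_le (fun _ ↦ sv_nonneg T _) fun n ↦ antitone_sv T (Nat.le_succ _)
  exact heven.even_add_odd hodd

end ApproximateSingularValueDecomposition

theorem smul_mem_twoSidedIdeal {R A : Type*} [Ring A] [SMul R A] [IsScalarTower R A A]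
    {J : TwoSidedIdeal A} (c : R) {a : A} (ha : a ∈ J) : c • a ∈ J := by
  rw [← one_mul a, ← smul_mul_assoc]
  exact J.mul_mem_left _ _ ha

open InnerProductSpace in
theorem rankOne_mem_twoSidedIdeal {𝕜 E : Type*} [RCLike 𝕜] [NormedAddCommGroup E]
    [InnerProductSpace 𝕜 E] {J : TwoSidedIdeal (E →L[𝕜] E)} {T : E →L[𝕜] E} (hT : T ∈ J)
    (hT0 : T ≠ 0) (u v : E) : rankOne 𝕜 u v ∈ J := by
  obtain ⟨x, hx⟩ : ∃ x, T x ≠ 0 := by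
    by_contra! h
    exact hT0 (ContinuousLinearMap.ext h)
  have hmem := J.mul_mem_right _ (rankOne 𝕜 x v) (J.mul_mem_left (rankOne 𝕜 u (T x)) _ hT)
  have heq : rankOne 𝕜 u (T x) * T * rankOne 𝕜 x v = (‖T x‖ ^ 2 : 𝕜) • rankOne 𝕜 u v := by
    ext y
    simp [smul_smul, mul_comm, inner_self_eq_norm_sq_to_K]
  have hne : (‖T x‖ ^ 2 : 𝕜) ≠ 0 := by simpa using hx
  rw [heq] at hmem
  rw [← inv_smul_smul₀ hne (rankOne 𝕜 u v)]
  exact smul_mem_twoSidedIdeal _ hmem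

section PositiveTrace

open scoped ComplexOrder

/-- A positive trace on a two-sided ideal `J`: a function that is linear and tracial on `J` and
takes nonnegative values on the positive elements of `J`. It is a function on the whole algebra,
whose values outside `J` are irrelevant. -/
structure IsPositiveTrace {A : Type*} [Ring A] [Algebra ℂ A] [PartialOrder A]
    (J : TwoSidedIdeal A) (φ : A → ℂ) : Prop where
  map_add : ∀ a ∈ J, ∀ b ∈ J, φ (a + b) = φ a + φ b
  map_smul : ∀ (c : ℂ), ∀ a ∈ J, φ (c • a) = c * φ a
  map_mul_comm : ∀ a ∈ J, ∀ b, φ (a * b) = φ (b * a)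
  nonneg : ∀ a ∈ J, 0 ≤ a → 0 ≤ φ a

namespace IsPositiveTrace

section Ring

variable {A : Type*} [Ring A] [Algebra ℂ A] [PartialOrder A] {J : TwoSidedIdeal A} {φ : A → ℂ}
  {a b u v : A}

theorem map_sub (hφ : IsPositiveTrace J φ) (ha : a ∈ J) (hb : b ∈ J) :
    φ (a - b) = φ a - φ b := by
  rw [eq_sub_iff_add_eq, ← hφ.map_add _ (J.sub_mem ha hb) _ hb, sub_add_cancel]

theorem map_sum (hφ : IsPositiveTrace J φ) {ι : Type*} (s : Finset ι) {f : ι → A}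
    (hf : ∀ i ∈ s, f i ∈ J) : φ (∑ i ∈ s, f i) = ∑ i ∈ s, φ (f i) := by
  classical
  induction s using Finset.induction_on with
  | empty => simpa using hφ.map_smul 0 0 J.zero_mem
  | insert i s hi ih =>
    rw [Finset.forall_mem_insert] at hf
    rw [Finset.sum_insert hi, Finset.sum_insert hi,
      hφ.map_add _ hf.1 _ (sum_mem hf.2), ih hf.2]

theorem mono [IsOrderedAddMonoid A] (hφ : IsPositiveTrace J φ) (ha : a ∈ J) (hb : b ∈ J)
    (hab : a ≤ b) : φ a ≤ φ b := by
  rw [← sub_nonneg, ← hφ.map_sub hb ha]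
  exact hφ.nonneg _ (J.sub_mem hb ha) (sub_nonneg.2 hab)

theorem map_conj_of_mul_eq (hφ : IsPositiveTrace J φ) (ha : a ∈ J) (h : a * u * v = a) :
    φ (v * a * u) = φ a := by
  rw [mul_assoc, ← hφ.map_mul_comm _ (J.mul_mem_right _ _ ha), h]

theorem map_one_eq_zero (hφ : IsPositiveTrace J φ) (h1 : 1 ∈ J) {u₁ v₁ u₂ v₂ : A}
    (h₁ : v₁ * u₁ = 1) (h₂ : v₂ * u₂ = 1) (hsum : u₁ * v₁ + u₂ * v₂ = 1) : φ 1 = 0 := by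
  have hswap : ∀ {u v : A}, v * u = 1 → φ (u * v) = φ 1 := fun {u v} h ↦ by
    rw [hφ.map_mul_comm _ (by simpa using J.mul_mem_right _ u h1), h]
  have hmem : ∀ a, a ∈ J := fun a ↦ by simpa using J.mul_mem_right _ a h1
  have := hφ.map_add _ (hmem (u₁ * v₁)) _ (hmem (u₂ * v₂))
  rwa [hsum, hswap h₁, hswap h₂, left_eq_add] at this

end Ring

theorem eq_zero_of_map_one_eq_zero {A : Type*} [CStarAlgebra A] [PartialOrder A] [StarOrderedRing A]
    {J : TwoSidedIdeal A} {φ : A → ℂ} (hφ : IsPositiveTrace J φ) (h1 : 1 ∈ J) (hφ1 : φ 1 = 0)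
    {a : A} (ha : 0 ≤ a) : φ a = 0 := by
  have hmem : ∀ a, a ∈ J := fun a ↦ by simpa using J.mul_mem_right _ a h1
  refine le_antisymm ?_ (hφ.nonneg a (hmem a) ha)
  have hle : a ≤ (‖a‖ : ℂ) • 1 := by
    simpa [Algebra.algebraMap_eq_smul_one] using
      (IsSelfAdjoint.of_nonneg ha).le_algebraMap_norm_self
  calc φ a ≤ φ ((‖a‖ : ℂ) • 1) := hφ.mono (hmem a) (hmem _) hle
    _ = 0 := by rw [hφ.map_smul _ _ h1, hφ1, mul_zero]

section Operators

open InnerProductSpace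

variable {ι E : Type*} [NormedAddCommGroup E] [InnerProductSpace ℂ E]
  {J : TwoSidedIdeal (E →L[ℂ] E)} {φ : (E →L[ℂ] E) → ℂ}

theorem map_rankOne_self_eq (hφ : IsPositiveTrace J φ) (hJ : ∀ u v, rankOne ℂ u v ∈ J) {u v : E}
    (hu : ‖u‖ = 1) (hv : ‖v‖ = 1) : φ (rankOne ℂ u u) = φ (rankOne ℂ v v) := by
  have hmul {x y : E} (hy : ‖y‖ = 1) : rankOne ℂ x y * rankOne ℂ y x = rankOne ℂ x x := by
    ext z
    simp [inner_self_eq_norm_sq_to_K, hy]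
  rw [← hmul hv, hφ.map_mul_comm _ (hJ u v), hmul hu]

theorem map_one_eq_zero_of_hilbertBasis [CompleteSpace E] (hφ : IsPositiveTrace J φ)
    (e : HilbertBasis ℕ ℂ E) (h1 : 1 ∈ J) : φ 1 = 0 := by
  have hf : Function.Injective fun n : ℕ ↦ 2 * n := mul_right_injective₀ two_ne_zero
  have hg : Function.Injective fun n : ℕ ↦ 2 * n + 1 := (add_left_injective 1).comp hf
  obtain ⟨U, hU⟩ := exists_linearIsometry_apply_hilbertBasis_eq e (e.orthonormal.comp _ hf)
  obtain ⟨V, hV⟩ := exists_linearIsometry_apply_hilbertBasis_eq e (e.orthonormal.comp _ hg)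
  refine hφ.map_one_eq_zero h1 U.adjoint_comp_self V.adjoint_comp_self ?_
  have hadd := (IsDiagonal.mul_star (U := U.toContinuousLinearMap) hf hU).add
    (.mul_star (U := V.toContinuousLinearMap) hg hV)
  rw [range_two_mul, range_two_mul_add_one, ← Nat.isCompl_even_odd.compl_eq,
    Set.indicator_self_add_compl] at hadd
  exact hadd.eq (.one e)

theorem map_rankOne_self_eq_zero [CompleteSpace E] (hφ : IsPositiveTrace J φ)
    {e : HilbertBasis ι ℂ E} (hJ : ∀ u v, rankOne ℂ u v ∈ J) {D : E →L[ℂ] E} {d : ι → ℝ}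
    (hD : D ∈ J) (hd : 0 ≤ d) (hsum : ¬ Summable d) (hdiag : IsDiagonal e D d) (i : ι) :
    φ (rankOne ℂ (e i) (e i)) = 0 := by
  classical
  set t := φ (rankOne ℂ (e i) (e i)) with ht
  have ht0 : 0 ≤ t := hφ.nonneg _ (hJ _ _) <|
    (ContinuousLinearMap.nonneg_iff_isPositive _).2 (isPositive_rankOne_self _)
  have hsummand (j : ι) : (d j : ℂ) • rankOne ℂ (e j) (e j) ∈ J :=
    smul_mem_twoSidedIdeal _ (hJ _ _)
  have hle (s : Finset ι) : ∑ j ∈ s, d j * t ≤ φ D := by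
    calc ∑ j ∈ s, d j * t = φ (∑ j ∈ s, (d j : ℂ) • rankOne ℂ (e j) (e j)) := by
          rw [hφ.map_sum s fun j _ ↦ hsummand j]
          refine Finset.sum_congr rfl fun j _ ↦ ?_
          rw [hφ.map_smul _ _ (hJ _ _), ht,
            hφ.map_rankOne_self_eq hJ (e.orthonormal.1 i) (e.orthonormal.1 j)]
      _ ≤ φ D := hφ.mono (sum_mem fun j _ ↦ hsummand j) hD <|
          (IsDiagonal.sum_rankOne e s d).le hdiag fun j ↦ by
            dsimp only
            split_ifs
            exacts [le_rfl, hd j]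
  by_contra hne
  have hre : Summable fun j ↦ d j * t.re :=
    summable_of_sum_le (fun j ↦ mul_nonneg (hd j) (Complex.le_def.1 ht0).1) fun s ↦ by
      simpa using (Complex.le_def.1 (hle s)).1
  refine hsum ((summable_mul_right_iff fun h ↦ hne ?_).1 hre)
  exact Complex.ext h (Complex.le_def.1 ht0).2.symm

theorem map_le_map_of_eventually_le [CompleteSpace E] (hφ : IsPositiveTrace J φ)
    {e : HilbertBasis ι ℂ E} (hmem : ∀ i, rankOne ℂ (e i) (e i) ∈ J)
    (hzero : ∀ i, φ (rankOne ℂ (e i) (e i)) = 0)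
    {D D' : E →L[ℂ] E} {d d' : ι → ℝ} (hD : D ∈ J) (hD' : D' ∈ J) (hdiag : IsDiagonal e D d)
    (hdiag' : IsDiagonal e D' d') (h : ∀ᶠ i in cofinite, d i ≤ d' i) : φ D ≤ φ D' := by
  classical
  let s : Finset ι := (eventually_cofinite.1 h).toFinset
  let F : E →L[ℂ] E := ∑ i ∈ s, ((d i - d' i : ℝ) : ℂ) • rankOne ℂ (e i) (e i)
  have hsummand (i : ι) : ((d i - d' i : ℝ) : ℂ) • rankOne ℂ (e i) (e i) ∈ J :=
    smul_mem_twoSidedIdeal _ (hmem i)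
  have hF : F ∈ J := sum_mem fun i _ ↦ hsummand i
  have hφF : φ F = 0 := by
    rw [hφ.map_sum s fun i _ ↦ hsummand i]
    exact Finset.sum_eq_zero fun i _ ↦ by rw [hφ.map_smul _ _ (hmem i), hzero, mul_zero]
  have hle : D ≤ D' + F := hdiag.le (hdiag'.add (.sum_rankOne e s fun i ↦ d i - d' i)) fun i ↦ by
    simp only [s, Set.Finite.mem_toFinset, Set.mem_ofPred_eq, Pi.add_apply]
    split_ifs <;> linarith
  calc φ D ≤ φ (D' + F) := hφ.mono hD (J.add_mem hD' hF) hle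
    _ = φ D' := by rw [hφ.map_add _ hD' _ hF, hφF, add_zero]

theorem map_le_map_of_isEquivalent [CompleteSpace E] (hφ : IsPositiveTrace J φ)
    {e : HilbertBasis ι ℂ E} (hmem : ∀ i, rankOne ℂ (e i) (e i) ∈ J)
    (hzero : ∀ i, φ (rankOne ℂ (e i) (e i)) = 0)
    {D D' : E →L[ℂ] E} {d d' : ι → ℝ} (hD : D ∈ J) (hD' : D' ∈ J) (hdiag : IsDiagonal e D d)
    (hdiag' : IsDiagonal e D' d') (hd' : 0 ≤ d') (h : Asymptotics.IsEquivalent cofinite d d') :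
    φ D ≤ φ D' := by
  have hle {c : ℝ} (hc : 1 < c) : φ D ≤ c * φ D' := by
    rw [← hφ.map_smul _ _ hD']
    refine hφ.map_le_map_of_eventually_le hmem hzero hD (smul_mem_twoSidedIdeal _ hD') hdiag
      (hdiag'.smul c) ?_
    filter_upwards [h.isLittleO.def (sub_pos.2 hc)] with i hi
    have hnorm : |d i - d' i| ≤ (c - 1) * d' i := by
      simpa [abs_of_nonneg (hd' i)] using hi
    calc d i ≤ d' i + |d i - d' i| := sub_le_iff_le_add'.1 (le_abs_self _)
      _ ≤ c * d' i := by linarith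
  have hlim : Tendsto (fun c : ℝ ↦ (c : ℂ) * φ D') (𝓝[>] 1) (𝓝 (φ D')) := by
    have : ContinuousWithinAt (fun c : ℝ ↦ (c : ℂ) * φ D') (Set.Ioi 1) 1 := by fun_prop
    simpa using this.tendsto
  exact ge_of_tendsto hlim (eventually_mem_nhdsWithin.mono fun c hc ↦ hle hc)

theorem map_eq_of_isEquivalent_sv [CompleteSpace E] (hφ : IsPositiveTrace J φ)
    (e : HilbertBasis ℕ ℂ E) (hJ : ∃ X ∈ J, ¬ Summable (sv X)) {S T : E →L[ℂ] E} (hS : S ∈ J)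
    (hT : T ∈ J) (hSpos : S.IsPositive) (hTpos : T.IsPositive)
    (h : Asymptotics.IsEquivalent atTop (sv S) (sv T)) : φ S = φ T := by
  by_cases h1 : 1 ∈ J
  · have hφ0 {A : E →L[ℂ] E} (hA : A.IsPositive) : φ A = 0 :=
      hφ.eq_zero_of_map_one_eq_zero h1 (hφ.map_one_eq_zero_of_hilbertBasis e h1)
        ((ContinuousLinearMap.nonneg_iff_isPositive _).2 hA)
    rw [hφ0 hSpos, hφ0 hTpos]
  obtain ⟨X, hX, hXsum⟩ := hJ
  obtain ⟨D, hD, d, hd, hdsum, hdiag⟩ := exists_mem_isDiagonal_not_summable e hX hXsum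
  have hD0 : D ≠ 0 := by
    rintro rfl
    have hd0 : d = 0 := funext fun i ↦ by
      simpa [e.orthonormal.ne_zero i] using (hdiag i).symm
    exact hdsum (hd0 ▸ summable_zero)
  have hmem := rankOne_mem_twoSidedIdeal hD hD0
  have hzero := hφ.map_rankOne_self_eq_zero hmem hD hd hdsum hdiag
  obtain ⟨U, hSU, hUdiag⟩ :=
    exists_isDiagonal_conj_sv e hSpos (tendsto_sv_zero_of_mem_twoSidedIdeal e h1 hS)
  obtain ⟨V, hTV, hVdiag⟩ :=
    exists_isDiagonal_conj_sv e hTpos (tendsto_sv_zero_of_mem_twoSidedIdeal e h1 hT)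
  have hSmem : star U * S * U ∈ J := J.mul_mem_right _ _ (J.mul_mem_left _ _ hS)
  have hTmem : star V * T * V ∈ J := J.mul_mem_right _ _ (J.mul_mem_left _ _ hT)
  rw [← Nat.cofinite_eq_atTop] at h
  rw [← hφ.map_conj_of_mul_eq hS hSU, ← hφ.map_conj_of_mul_eq hT hTV]
  exact le_antisymm
    (hφ.map_le_map_of_isEquivalent (fun _ ↦ hmem _ _) hzero hSmem hTmem hUdiag hVdiag
      (sv_nonneg T) h)
    (hφ.map_le_map_of_isEquivalent (fun _ ↦ hmem _ _) hzero hTmem hSmem hVdiag hUdiag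
      (sv_nonneg S) h.symm)

end Operators

end IsPositiveTrace

end PositiveTrace

/-- if `I ⊄ L₁` and `φ` is a positive trace on the ideal `I`, then `φ`
takes equal values on positive operators with equivalent singular value sequences. -/
theorem statement2
    {H : Type*} [NormedAddCommGroup H] [InnerProductSpace ℂ H] [CompleteSpace H]
    (e : HilbertBasis ℕ ℂ H)
    (I : Set (H →L[ℂ] H))
    -- `I` is a two-sided ideal of the bounded operators
    (hI_add : ∀ S T : H →L[ℂ] H, S ∈ I → T ∈ I → S + T ∈ I)
    (hI_smul : ∀ (c : ℂ) (T : H →L[ℂ] H), T ∈ I → c • T ∈ I)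
    (hI_left : ∀ (S T : H →L[ℂ] H), T ∈ I → S ∘L T ∈ I)
    (hI_right : ∀ (S T : H →L[ℂ] H), T ∈ I → T ∘L S ∈ I)
    -- `I` is not contained in the trace class `L₁`
    (hI_notL1 : ∃ T ∈ I, ¬ Summable (fun n => sv T n))
    -- `φ` is a positive trace on `I`
    (φ : (H →L[ℂ] H) → ℂ)
    (hφ_add : ∀ S T : H →L[ℂ] H, S ∈ I → T ∈ I → φ (S + T) = φ S + φ T)
    (hφ_smul : ∀ (c : ℂ) (T : H →L[ℂ] H), T ∈ I → φ (c • T) = c * φ T)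
    (hφ_tr : ∀ (T S : H →L[ℂ] H), T ∈ I → φ (S ∘L T) = φ (T ∘L S))
    (hφ_pos : ∀ T : H →L[ℂ] H, T ∈ I → T.IsPositive → ∃ r : ℝ, 0 ≤ r ∧ φ T = (r : ℂ))
    (S T : H →L[ℂ] H) (hS : S ∈ I) (hT : T ∈ I)
    (hSpos : S.IsPositive) (hTpos : T.IsPositive)
    -- `μ(n,S) = μ(n,T) + o(μ(n,T))` as `n → ∞`
    (hequiv : (fun n => sv S n - sv T n) =o[atTop] fun n => sv T n) :
    φ S = φ T := by
  obtain ⟨X, hX, hXsum⟩ := hI_notL1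
  let J : TwoSidedIdeal (H →L[ℂ] H) := .mk' I
    (by simpa using hI_smul 0 X hX) (hI_add _ _) (fun hx ↦ by simpa using hI_smul (-1) _ hx)
    (hI_left _ _) (hI_right _ _)
  have hJ {A : H →L[ℂ] H} : A ∈ J ↔ A ∈ I := TwoSidedIdeal.mem_mk' ..
  have hφ : IsPositiveTrace J φ :=
    { map_add := fun a ha b hb ↦ hφ_add a b (hJ.1 ha) (hJ.1 hb)
      map_smul := fun c a ha ↦ hφ_smul c a (hJ.1 ha)
      map_mul_comm := fun a ha b ↦ (hφ_tr a b (hJ.1 ha)).symm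
      nonneg := fun a ha ha0 ↦ by
        obtain ⟨r, hr, hφr⟩ :=
          hφ_pos a (hJ.1 ha) ((ContinuousLinearMap.nonneg_iff_isPositive a).1 ha0)
        rw [hφr]
        exact_mod_cast hr }
  exact hφ.map_eq_of_isEquivalent_sv e ⟨X, hJ.2 hX, hXsum⟩ (hJ.2 hS) (hJ.2 hT) hSpos hTpos hequiv
end
end

section
/- Let (x_n)_{n≥0} be a sequence of complex numbers with |x_n| = O(n^{α−1}) for some α ≥ 0. If lim_{r→1−} (1−r)^α ∑_{n=0}^∞ x_n r^n = c, then lim_{n→∞} n^{−α} ∑_{j=0}^n x_j = c / Γ(α+1). -/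
open MeasureTheory Filter Topology
open scoped ENNReal

noncomputable section

/-!
Karamata's method. Since the numbers `Ring.multichoose α n` are the power series coefficients of
`(1 - r) ^ (-α)`, subtracting `Ring.multichoose α n • c` from `x n` reduces the theorem to `c = 0`,
the asymptotics of the model sequence being the Gauss product for `Γ`.

For `c = 0`, consider `(1 - r) ^ α • ∑' n, g (r ^ n) • x n` as `r` tends to `1` from the left.
Substituting `r ^ k` for `r` shows that it tends to `0` for `g y = y ^ k` with `0 < k`, hence for
every polynomial vanishing at `0`. If `g y = y ^ 2 * (1 - y) * f y`, the growth of `x` bounds its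
norm by a constant times the Jackson sum `∑' n, (1 - r) * r ^ n * |f (r ^ n)|`, which tends to
`∫ y in (0, 1], |f y|`; by `L¹`-density of polynomials the limit is `0` for all bounded `f`
continuous almost everywhere. As the indicator of `[e⁻¹, 1]` differs from `y ^ 2` by such a `g`, it
is admissible too, and at `r = exp (-1 / N)` it yields the partial sum up to `N`.
-/

open Set Asymptotics Polynomial

section GeometricPartition

variable {E : Type*} [NormedAddCommGroup E]

/-- For `0 < r < 1` and `0 < y ≤ 1`, the smallest power `r ^ n` with `y ≤ r ^ n`, so that the
Jackson sum of `f` is the integral of the step function `f (geomCeil r y)`. -/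
def geomCeil (r y : ℝ) : ℝ := r ^ ⌊Real.logb r y⌋₊

variable {r y : ℝ}

lemma geomCeil_eq_pow (hr : r ∈ Ioo (0 : ℝ) 1) {n : ℕ} (hy : y ∈ Ioc (r ^ (n + 1)) (r ^ n)) :
    geomCeil r y = r ^ n := by
  have hy0 : 0 < y := (pow_pos hr.1 _).trans hy.1
  have hlog_pow (k : ℕ) : Real.logb r (r ^ k) = k := by
    rw [Real.logb_pow, Real.logb_self_eq_one_iff.2 ⟨hr.1.ne', hr.2.ne, by linarith [hr.1]⟩, mul_one]
  have hle : (n : ℝ) ≤ Real.logb r y := by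
    rw [← hlog_pow n]
    exact (Real.logb_le_logb_of_base_lt_one hr.1 hr.2 (pow_pos hr.1 n) hy0).2 hy.2
  have hlt : Real.logb r y < n + 1 := by
    have := Real.logb_lt_logb_of_base_lt_one hr.1 hr.2 (pow_pos hr.1 _) hy.1
    rwa [hlog_pow, Nat.cast_succ] at this
  rw [geomCeil, (Nat.floor_eq_iff (n.cast_nonneg.trans hle)).2 ⟨hle, hlt⟩]

lemma iUnion_Ioc_pow_succ (hr : r ∈ Ioo (0 : ℝ) 1) :
    ⋃ n : ℕ, Ioc (r ^ (n + 1)) (r ^ n) = Ioc 0 1 := by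
  refine Subset.antisymm (iUnion_subset fun n => Ioc_subset_Ioc (pow_pos hr.1 _).le
    (pow_le_one₀ hr.1.le hr.2.le)) fun y hy => mem_iUnion.2 ?_
  exact exists_nat_pow_near_of_lt_one hy.1 hy.2 hr.1 hr.2

lemma geomCeil_mem_Ioc (hr : r ∈ Ioo (0 : ℝ) 1) (y : ℝ) :
    geomCeil r y ∈ Ioc (0 : ℝ) 1 :=
  ⟨pow_pos hr.1 _, pow_le_one₀ hr.1.le hr.2.le⟩

lemma geomCeil_mem_Ico (hr : r ∈ Ioo (0 : ℝ) 1) (hy : y ∈ Ioc (0 : ℝ) 1) :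
    geomCeil r y ∈ Ico y (y / r) := by
  obtain ⟨n, hn⟩ := mem_iUnion.1 ((iUnion_Ioc_pow_succ hr).symm ▸ hy)
  rw [geomCeil_eq_pow hr hn, mem_Ico, lt_div_iff₀ hr.1, ← pow_succ]
  exact hn.symm

lemma tendsto_geomCeil (hy : y ∈ Ioc (0 : ℝ) 1) :
    Tendsto (fun r => geomCeil r y) (𝓝[<] 1) (𝓝 y) := by
  have hdiv : Tendsto (fun r : ℝ => y / r) (𝓝[<] 1) (𝓝 y) := by
    have : ContinuousAt (fun r : ℝ => y / r) 1 := by fun_prop (disch := norm_num)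
    simpa using this.tendsto.mono_left nhdsWithin_le_nhds
  have hmem : ∀ᶠ r : ℝ in 𝓝[<] 1, geomCeil r y ∈ Ico y (y / r) := by
    filter_upwards [Ioo_mem_nhdsLT zero_lt_one] with r hr using geomCeil_mem_Ico hr hy
  exact tendsto_of_tendsto_of_tendsto_of_le_of_le' tendsto_const_nhds hdiv
    (hmem.mono fun _ h => h.1) (hmem.mono fun _ h => h.2.le)

lemma stronglyMeasurable_comp_geomCeil (f : ℝ → E) (r : ℝ) :
    StronglyMeasurable fun y => f (geomCeil r y) :=
  (StronglyMeasurable.of_discrete (f := fun n : ℕ => f (r ^ n))).comp_measurable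
    (by unfold Real.logb; fun_prop)

end GeometricPartition

section JacksonSum

variable {E : Type*} [NormedAddCommGroup E] {f : ℝ → E} {M : ℝ}

lemma ae_tendsto_comp_geomCeil
    (hf : ∀ᵐ y ∂volume.restrict (Ioc (0 : ℝ) 1), ContinuousAt f y) :
    ∀ᵐ y ∂volume.restrict (Ioc (0 : ℝ) 1),
      Tendsto (fun r => f (geomCeil r y)) (𝓝[<] 1) (𝓝 (f y)) := by
  filter_upwards [hf, ae_restrict_mem measurableSet_Ioc] with y hfy hy
  exact hfy.tendsto.comp (tendsto_geomCeil hy)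

lemma integrableOn_of_bounded_of_ae_continuousAt (hM : ∀ y ∈ Ioc (0 : ℝ) 1, ‖f y‖ ≤ M)
    (hf : ∀ᵐ y ∂volume.restrict (Ioc (0 : ℝ) 1), ContinuousAt f y) :
    IntegrableOn f (Ioc 0 1) := by
  have hmeas : AEStronglyMeasurable f (volume.restrict (Ioc 0 1)) :=
    aestronglyMeasurable_of_tendsto_ae (𝓝[<] (1 : ℝ))
      (fun r => (stronglyMeasurable_comp_geomCeil f r).aestronglyMeasurable)
      (ae_tendsto_comp_geomCeil hf)
  exact Integrable.of_bound hmeas M (ae_restrict_of_forall_mem measurableSet_Ioc hM)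

variable [NormedSpace ℝ E] [CompleteSpace E]

lemma hasSum_jackson (hM : ∀ y ∈ Ioc (0 : ℝ) 1, ‖f y‖ ≤ M) {r : ℝ}
    (hr : r ∈ Ioo (0 : ℝ) 1) :
    HasSum (fun n : ℕ => ((1 - r) * r ^ n) • f (r ^ n)) (∫ y in Ioc 0 1, f (geomCeil r y)) := by
  have hint : IntegrableOn (fun y => f (geomCeil r y)) (Ioc 0 1) :=
    Integrable.of_bound (stronglyMeasurable_comp_geomCeil f r).aestronglyMeasurable M
      (ae_restrict_of_forall_mem measurableSet_Ioc fun y _ => hM _ (geomCeil_mem_Ioc hr y))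
  have hpiece (n : ℕ) : ∫ y in Ioc (r ^ (n + 1)) (r ^ n), f (geomCeil r y) =
      ((1 - r) * r ^ n) • f (r ^ n) := by
    rw [setIntegral_congr_fun measurableSet_Ioc fun y hy => congrArg f (geomCeil_eq_pow hr hy),
      setIntegral_const,
      Real.volume_real_Ioc_of_le (pow_le_pow_of_le_one hr.1.le hr.2.le (Nat.le_add_right n 1))]
    congr 1
    ring
  simp only [← hpiece]
  rw [← iUnion_Ioc_pow_succ hr] at hint ⊢
  exact hasSum_integral_iUnion (fun _ => measurableSet_Ioc)
    (pow_right_anti₀ hr.1.le hr.2.le).pairwise_disjoint_on_Ioc_succ hint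

lemma tendsto_jackson (hM : ∀ y ∈ Ioc (0 : ℝ) 1, ‖f y‖ ≤ M)
    (hf : ∀ᵐ y ∂volume.restrict (Ioc (0 : ℝ) 1), ContinuousAt f y) :
    Tendsto (fun r : ℝ => ∑' n : ℕ, ((1 - r) * r ^ n) • f (r ^ n)) (𝓝[<] 1)
      (𝓝 (∫ y in Ioc 0 1, f y)) := by
  have hlim : Tendsto (fun r : ℝ => ∫ y in Ioc 0 1, f (geomCeil r y)) (𝓝[<] 1)
      (𝓝 (∫ y in Ioc 0 1, f y)) := by
    refine tendsto_integral_filter_of_dominated_convergence (fun _ => M)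
      (.of_forall fun r => (stronglyMeasurable_comp_geomCeil f r).aestronglyMeasurable) ?_
      (integrable_const M) (ae_tendsto_comp_geomCeil hf)
    filter_upwards [Ioo_mem_nhdsLT zero_lt_one] with r hr
    exact ae_restrict_of_forall_mem measurableSet_Ioc fun y _ => hM _ (geomCeil_mem_Ioc hr y)
  refine hlim.congr' ?_
  filter_upwards [Ioo_mem_nhdsLT zero_lt_one] with r hr using (hasSum_jackson hM hr).tsum_eq.symm

end JacksonSum

lemma exists_polynomial_integral_abs_sub_lt {a b : ℝ} {f : ℝ → ℝ}
    (hf : IntegrableOn f (Ioc a b)) {ε : ℝ} (hε : 0 < ε) :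
    ∃ q : ℝ[X], ∫ y in Ioc a b, |f y - q.eval y| < ε := by
  obtain ⟨g, -, hfg, hg, hgint⟩ := hf.exists_hasCompactSupport_integral_sub_le (half_pos hε)
  set δ := ε / (2 * (volume.real (Ioc a b) + 1)) with hδ
  have hδ0 : 0 < δ := by positivity
  obtain ⟨q, hq⟩ := exists_polynomial_near_of_continuousOn a b g hg.continuousOn δ hδ0
  have hdom : IntegrableOn (fun y => ‖f y - g y‖ + δ) (Ioc a b) :=
    (hf.sub hgint).norm.add (integrable_const δ)
  refine ⟨q, ?_⟩
  calc ∫ y in Ioc a b, |f y - q.eval y| ≤ ∫ y in Ioc a b, (‖f y - g y‖ + δ) := by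
        refine setIntegral_mono_on ?_ hdom measurableSet_Ioc fun y hy => ?_
        · exact (hf.sub (q.continuous.integrableOn_Ioc)).abs
        · rw [Real.norm_eq_abs]
          have := abs_sub_le (f y) (g y) (q.eval y)
          rw [abs_sub_comm (g y)] at this
          linarith [hq y (Ioc_subset_Icc_self hy)]
    _ = (∫ y in Ioc a b, ‖f y - g y‖) + volume.real (Ioc a b) * δ := by
        rw [integral_add (by simpa using (hf.sub hgint).norm) (integrable_const δ),
          setIntegral_const, smul_eq_mul]
    _ ≤ ε / 2 + volume.real (Ioc a b) * δ := by gcongr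
    _ < ε := by
        have : 2 * (volume.real (Ioc a b) + 1) * δ = ε := by rw [hδ]; field_simp
        linarith

section AbelMean

variable {E : Type*} [NormedAddCommGroup E] [NormedSpace ℝ E]

/-- Karamata's mean of order `α` of the sequence `x` with test function `g`; the test function
`g y = y` gives the normalized Abel sum `(1 - r) ^ α • ∑' n, r ^ n • x n`, and indicators give
normalized partial sums. -/
def abelMean (α : ℝ) (x : ℕ → E) (g : ℝ → ℝ) (r : ℝ) : E :=
  (1 - r) ^ α • ∑' n : ℕ, g (r ^ n) • x n

variable {α : ℝ} {x : ℕ → E} {g : ℝ → ℝ} {r : ℝ}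

lemma abelMean_add (g₁ g₂ : ℝ → ℝ) (h₁ : Summable fun n : ℕ => g₁ (r ^ n) • x n)
    (h₂ : Summable fun n : ℕ => g₂ (r ^ n) • x n) :
    abelMean α x (g₁ + g₂) r = abelMean α x g₁ r + abelMean α x g₂ r := by
  simp only [abelMean, Pi.add_apply, add_smul, h₁.tsum_add h₂, smul_add]

lemma abelMean_smul (a : ℝ) : abelMean α x (a • g) r = a • abelMean α x g r := by
  simp only [abelMean, Pi.smul_apply, smul_assoc, tsum_const_smul'', smul_comm a ((1 - r) ^ α)]

lemma summable_norm_pow_smul {β : ℝ} (hx : x =O[atTop] fun n : ℕ => (n : ℝ) ^ β)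
    (hr : r ∈ Ioo (0 : ℝ) 1) : Summable fun n : ℕ => ‖r ^ n • x n‖ := by
  have hpow : (fun n : ℕ => (n : ℝ) ^ β) =O[atTop] fun n : ℕ => (n : ℝ) ^ ⌈β⌉₊ := by
    refine .of_bound 1 ?_
    filter_upwards [eventually_ge_atTop 1] with n hn
    rw [one_mul, ← Real.rpow_natCast, Real.norm_of_nonneg (by positivity),
      Real.norm_of_nonneg (by positivity)]
    exact Real.rpow_le_rpow_of_exponent_le (by exact_mod_cast hn) (Nat.le_ceil β)
  have hsum : Summable fun n : ℕ => (n : ℝ) ^ ⌈β⌉₊ * r ^ n :=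
    summable_pow_mul_geometric_of_norm_lt_one _ (by rw [Real.norm_of_nonneg hr.1.le]; exact hr.2)
  refine summable_of_isBigO_nat hsum ?_
  have := ((isBigO_refl (fun n : ℕ => r ^ n) atTop).smul (hx.trans hpow)).norm_left
  simpa only [smul_eq_mul, mul_comm] using this

lemma summable_smul_of_abs_le_mul [CompleteSpace E] {β : ℝ}
    (hx : x =O[atTop] fun n : ℕ => (n : ℝ) ^ β) {M : ℝ}
    (hg : ∀ y ∈ Ioc (0 : ℝ) 1, |g y| ≤ M * y) (hr : r ∈ Ioo (0 : ℝ) 1) :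
    Summable fun n : ℕ => g (r ^ n) • x n := by
  refine .of_norm_bounded ((summable_norm_pow_smul hx hr).mul_left M) fun n => ?_
  have hpow : 0 < r ^ n := pow_pos hr.1 n
  rw [norm_smul, norm_smul, ← mul_assoc, Real.norm_of_nonneg hpow.le]
  gcongr
  exact hg _ ⟨hpow, pow_le_one₀ hr.1.le hr.2.le⟩

lemma exists_abs_eval_le (q : ℝ[X]) : ∃ M, ∀ y ∈ Ioc (0 : ℝ) 1, |q.eval y| ≤ M := by
  obtain ⟨M, hM⟩ := isCompact_Icc.exists_bound_of_continuousOn (q.continuousOn (s := Icc 0 1))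
  exact ⟨M, fun y hy => hM y (Ioc_subset_Icc_self hy)⟩

lemma summable_mul_eval_smul [CompleteSpace E] {β : ℝ}
    (hx : x =O[atTop] fun n : ℕ => (n : ℝ) ^ β) (q : ℝ[X]) (hr : r ∈ Ioo (0 : ℝ) 1) :
    Summable fun n : ℕ => (r ^ n * q.eval (r ^ n)) • x n := by
  obtain ⟨M, hM⟩ := exists_abs_eval_le q
  refine summable_smul_of_abs_le_mul (g := fun y => y * q.eval y) (M := M) hx (fun y hy => ?_) hr
  rw [abs_mul, abs_of_pos hy.1, mul_comm]
  gcongr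
  · exact hy.1.le
  · exact hM y hy

lemma tendsto_abelMean_pow {c : E} (h : Tendsto (abelMean α x id) (𝓝[<] 1) (𝓝 c)) {k : ℕ}
    (hk : k ≠ 0) : Tendsto (abelMean α x (· ^ k)) (𝓝[<] 1) (𝓝 (((k : ℝ) ^ α)⁻¹ • c)) := by
  have hpow : Tendsto (fun r : ℝ => r ^ k) (𝓝[<] 1) (𝓝[<] 1) := by
    refine tendsto_nhdsWithin_iff.2 ⟨?_, ?_⟩
    · simpa using ((continuous_pow k).tendsto (1 : ℝ)).mono_left nhdsWithin_le_nhds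
    · filter_upwards [Ioo_mem_nhdsLT zero_lt_one] with r hr using pow_lt_one₀ hr.1.le hr.2 hk
  have hgeom : Tendsto (fun r : ℝ => ((∑ i ∈ Finset.range k, r ^ i) ^ α)⁻¹) (𝓝[<] 1)
      (𝓝 (((k : ℝ) ^ α)⁻¹)) := by
    have hk' : (k : ℝ) ≠ 0 := Nat.cast_ne_zero.2 hk
    have hcont : ContinuousAt (fun r : ℝ => ∑ i ∈ Finset.range k, r ^ i) 1 := by fun_prop
    have hsum : Tendsto (fun r : ℝ => ∑ i ∈ Finset.range k, r ^ i) (𝓝[<] 1) (𝓝 k) := by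
      simpa using hcont.tendsto.mono_left nhdsWithin_le_nhds
    exact (hsum.rpow_const (.inl hk')).inv₀ (by positivity)
  refine (hgeom.smul (h.comp hpow)).congr' ?_
  filter_upwards [Ioo_mem_nhdsLT zero_lt_one] with r hr
  have hsum : 0 < ∑ i ∈ Finset.range k, r ^ i :=
    Finset.sum_pos (fun i _ => pow_pos hr.1 i) (Finset.nonempty_range_iff.2 hk)
  simp only [Function.comp_apply, abelMean, id_eq, ← pow_mul, mul_comm k]
  rw [smul_smul, ← mul_neg_geom_sum r k, Real.mul_rpow (by linarith [hr.2]) hsum.le, mul_comm,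
    mul_inv_cancel_right₀ (Real.rpow_pos_of_pos hsum α).ne']

lemma tendsto_abelMean_mul_eval [CompleteSpace E] {β : ℝ}
    (hx : x =O[atTop] fun n : ℕ => (n : ℝ) ^ β)
    (h : Tendsto (abelMean α x id) (𝓝[<] 1) (𝓝 0)) (q : ℝ[X]) :
    Tendsto (abelMean α x fun y => y * q.eval y) (𝓝[<] 1) (𝓝 0) := by
  induction q using Polynomial.induction_on' with
  | add p q hp hq =>
    have hsum := hp.add hq
    rw [add_zero] at hsum
    refine hsum.congr' ?_
    filter_upwards [Ioo_mem_nhdsLT zero_lt_one] with r hr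
    rw [← abelMean_add (fun y => y * p.eval y) (fun y => y * q.eval y)
      (summable_mul_eval_smul hx p hr) (summable_mul_eval_smul hx q hr)]
    congr 1
    funext y
    simp only [eval_add, mul_add, Pi.add_apply]
  | monomial k a =>
    have hmonomial : (fun y => y * (monomial k a).eval y) = a • fun y : ℝ => y ^ (k + 1) := by
      funext y
      simp only [eval_monomial, Pi.smul_apply, smul_eq_mul]
      ring
    have hpow := (tendsto_abelMean_pow h k.succ_ne_zero).const_smul a
    rw [smul_zero, smul_zero] at hpow
    rw [hmonomial]
    exact hpow.congr fun r => (abelMean_smul a).symm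

end AbelMean

section Karamata

lemma rpow_le_rpow_self_mul_exp {α s : ℝ} (hα : 0 ≤ α) (hs : 0 ≤ s) :
    s ^ α ≤ α ^ α * Real.exp s := by
  rcases hα.eq_or_lt with rfl | hα
  · simpa using hs
  have hdiv : s / α ≤ Real.exp (s / α) := by linarith [Real.add_one_le_exp (s / α)]
  calc s ^ α = α ^ α * (s / α) ^ α := by
        rw [← Real.mul_rpow hα.le (by positivity), mul_div_cancel₀ s hα.ne']
    _ ≤ α ^ α * Real.exp (s / α) ^ α := by gcongr
    _ = α ^ α * Real.exp s := by rw [← Real.exp_mul, div_mul_cancel₀ s hα.ne']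

lemma rpow_mul_pow_le {α r : ℝ} (hα : 0 ≤ α) (hr : r ∈ Icc (0 : ℝ) 1) (n : ℕ) :
    (n * (1 - r)) ^ α * r ^ n ≤ α ^ α := by
  have hs : 0 ≤ n * (1 - r) := mul_nonneg n.cast_nonneg (by linarith [hr.2])
  have hpow : r ^ n ≤ Real.exp (-(n * (1 - r))) := by
    rw [← mul_neg, Real.exp_nat_mul]
    gcongr
    · exact hr.1
    · simpa using Real.one_sub_le_exp_neg (1 - r)
  calc (n * (1 - r)) ^ α * r ^ n
      ≤ (α ^ α * Real.exp (n * (1 - r))) * Real.exp (-(n * (1 - r))) := by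
        gcongr
        · exact pow_nonneg hr.1 n
        · exact rpow_le_rpow_self_mul_exp hα hs
    _ = α ^ α := by rw [mul_assoc, ← Real.exp_add, add_neg_cancel, Real.exp_zero, mul_one]

variable {E : Type*} [NormedAddCommGroup E] [NormedSpace ℝ E]
  {α : ℝ} {x : ℕ → E}

lemma exists_rpow_mul_norm_smul_le (hα : 0 ≤ α)
    (hx : x =O[atTop] fun n : ℕ => (n : ℝ) ^ (α - 1)) :
    ∃ D > 0, ∀ r ∈ Ioo (0 : ℝ) 1, ∀ n : ℕ,
      (1 - r) ^ α * ‖((r ^ n) ^ 2 * (1 - r ^ n)) • x n‖ ≤ D * ((1 - r) * r ^ n) := by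
  obtain ⟨C, hC, hxC⟩ := bound_of_isBigO_nat_atTop hx
  refine ⟨C * (α ^ α + 1), by positivity, fun r hr n => ?_⟩
  have hr1 : 0 < 1 - r := by linarith [hr.2]
  have hpow : 0 < r ^ n := pow_pos hr.1 n
  rcases n.eq_zero_or_pos with rfl | hn
  · simp only [pow_zero, sub_self, mul_zero, zero_smul, norm_zero]
    positivity
  have hn' : (0 : ℝ) < n := Nat.cast_pos.2 hn
  have hxn : ‖x n‖ ≤ C * (n : ℝ) ^ (α - 1) := by
    have := hxC (Real.rpow_pos_of_pos hn' _).ne'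
    rwa [Real.norm_of_nonneg (by positivity)] at this
  have hbernoulli : 1 - r ^ n ≤ n * (1 - r) := by
    linarith [one_add_mul_sub_le_pow (by linarith [hr.1] : -1 ≤ r) n]
  have hpow1 : 0 ≤ 1 - r ^ n := by linarith [pow_le_one₀ (n := n) hr.1.le hr.2.le]
  rw [norm_smul, Real.norm_of_nonneg (by positivity)]
  calc (1 - r) ^ α * ((r ^ n) ^ 2 * (1 - r ^ n) * ‖x n‖)
      ≤ (1 - r) ^ α * ((r ^ n) ^ 2 * (n * (1 - r)) * (C * (n : ℝ) ^ (α - 1))) := by gcongr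
    _ = C * ((n * (1 - r)) ^ α * r ^ n) * ((1 - r) * r ^ n) := by
        rw [Real.rpow_sub_one hn'.ne', Real.mul_rpow hn'.le hr1.le]
        field_simp
    _ ≤ C * (α ^ α + 1) * ((1 - r) * r ^ n) := by
        gcongr
        linarith [rpow_mul_pow_le hα (Ioo_subset_Icc_self hr) n]

lemma exists_norm_abelMean_le (hα : 0 ≤ α)
    (hx : x =O[atTop] fun n : ℕ => (n : ℝ) ^ (α - 1)) :
    ∃ D > 0, ∀ (f : ℝ → ℝ) (M : ℝ), (∀ y ∈ Ioc (0 : ℝ) 1, |f y| ≤ M) → ∀ r ∈ Ioo (0 : ℝ) 1,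
      ‖abelMean α x (fun y => y ^ 2 * (1 - y) * f y) r‖ ≤
        D * ∑' n : ℕ, ((1 - r) * r ^ n) • |f (r ^ n)| := by
  obtain ⟨D, hD, hbound⟩ := exists_rpow_mul_norm_smul_le hα hx
  refine ⟨D, hD, fun f M hM r hr => ?_⟩
  have hjackson : Summable fun n : ℕ => ((1 - r) * r ^ n) • |f (r ^ n)| :=
    (hasSum_jackson (f := fun y => |f y|) (fun y hy => (abs_abs (f y)).trans_le (hM y hy))
      hr).summable
  rw [abelMean, ← tsum_const_smul'']
  refine tsum_of_norm_bounded (hjackson.hasSum.mul_left D) fun n => ?_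
  have hr1 : 0 < (1 - r) ^ α := Real.rpow_pos_of_pos (by linarith [hr.2]) α
  calc ‖(1 - r) ^ α • ((r ^ n) ^ 2 * (1 - r ^ n) * f (r ^ n)) • x n‖
      = (1 - r) ^ α * ‖((r ^ n) ^ 2 * (1 - r ^ n)) • x n‖ * |f (r ^ n)| := by
        simp only [norm_smul, norm_mul, Real.norm_eq_abs, abs_of_pos hr1]
        ring
    _ ≤ D * ((1 - r) * r ^ n) * |f (r ^ n)| := by gcongr ?_ * _; exact hbound r hr n
    _ = D * (((1 - r) * r ^ n) • |f (r ^ n)|) := by rw [smul_eq_mul, mul_assoc]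

lemma abs_sq_mul_one_sub_mul_le {y t M : ℝ} (hy : y ∈ Ioc (0 : ℝ) 1) (ht : |t| ≤ M) :
    |y ^ 2 * (1 - y) * t| ≤ M * y := by
  have hy1 : 0 ≤ 1 - y := by linarith [hy.2]
  have hweight : y * (1 - y) ≤ 1 := mul_le_one₀ hy.2 hy1 (by linarith [hy.1])
  calc |y ^ 2 * (1 - y) * t| = y * (1 - y) * |t| * y := by
        rw [abs_mul, abs_mul, abs_pow, abs_of_pos hy.1, abs_of_nonneg hy1]
        ring
    _ ≤ 1 * M * y := by gcongr; exact hy.1.le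
    _ = M * y := by rw [one_mul]

variable [CompleteSpace E]

lemma tendsto_abelMean_sq_mul_one_sub_mul (hα : 0 ≤ α)
    (hx : x =O[atTop] fun n : ℕ => (n : ℝ) ^ (α - 1))
    (h : Tendsto (abelMean α x id) (𝓝[<] 1) (𝓝 0)) {f : ℝ → ℝ} {M : ℝ}
    (hM : ∀ y ∈ Ioc (0 : ℝ) 1, |f y| ≤ M)
    (hf : ∀ᵐ y ∂volume.restrict (Ioc (0 : ℝ) 1), ContinuousAt f y) :
    Tendsto (abelMean α x fun y => y ^ 2 * (1 - y) * f y) (𝓝[<] 1) (𝓝 0) := by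
  obtain ⟨D, hD, hbound⟩ := exists_norm_abelMean_le hα hx
  rw [NormedAddGroup.tendsto_nhds_zero]
  intro ε hε
  obtain ⟨q, hq⟩ := exists_polynomial_integral_abs_sub_lt
    (integrableOn_of_bounded_of_ae_continuousAt hM hf) (div_pos (half_pos hε) hD)
  obtain ⟨K, hK⟩ := exists_abs_eval_le q
  have hdiffM : ∀ y ∈ Ioc (0 : ℝ) 1, |f y - q.eval y| ≤ M + K := fun y hy =>
    (abs_sub _ _).trans (add_le_add (hM y hy) (hK y hy))
  have hjackson := tendsto_jackson (f := fun y => |f y - q.eval y|)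
    (fun y hy => (abs_abs _).trans_le (hdiffM y hy))
    (hf.mono fun y hy => (hy.sub q.continuous.continuousAt).abs)
  have hpoly := tendsto_abelMean_mul_eval hx h (X * (1 - X) * q)
  let g₁ : ℝ → ℝ := fun y => y ^ 2 * (1 - y) * (f y - q.eval y)
  let g₂ : ℝ → ℝ := fun y => y * (X * (1 - X) * q).eval y
  have hsplit : (fun y => y ^ 2 * (1 - y) * f y) = g₁ + g₂ := by
    funext y
    simp only [g₁, g₂, Pi.add_apply, eval_mul, eval_sub, eval_one, eval_X]
    ring
  filter_upwards [Ioo_mem_nhdsLT zero_lt_one, hjackson.eventually_lt_const hq,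
    NormedAddGroup.tendsto_nhds_zero.1 hpoly _ (half_pos hε)] with r hr hrjackson hrpoly
  have hdiff : ‖abelMean α x g₁ r‖ < ε / 2 :=
    (hbound _ _ hdiffM r hr).trans_lt (by rwa [lt_div_iff₀' hD] at hrjackson)
  have hsum₁ : Summable fun n => g₁ (r ^ n) • x n := summable_smul_of_abs_le_mul hx
    (fun y hy => abs_sq_mul_one_sub_mul_le hy (hdiffM y hy)) hr
  rw [hsplit, abelMean_add g₁ g₂ hsum₁ (summable_mul_eval_smul hx _ hr)]
  linarith [norm_add_le (abelMean α x g₁ r) (abelMean α x g₂ r)]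

lemma tendsto_abelMean_of_abs_le (hα : 0 ≤ α)
    (hx : x =O[atTop] fun n : ℕ => (n : ℝ) ^ (α - 1))
    (h : Tendsto (abelMean α x id) (𝓝[<] 1) (𝓝 0)) {g : ℝ → ℝ} {M : ℝ}
    (hM : ∀ y ∈ Ioc (0 : ℝ) 1, |g y| ≤ M * (y ^ 2 * (1 - y)))
    (hg : ∀ᵐ y ∂volume.restrict (Ioc (0 : ℝ) 1), ContinuousAt g y) :
    Tendsto (abelMean α x g) (𝓝[<] 1) (𝓝 0) := by
  have hweight : ∀ y ∈ Ioo (0 : ℝ) 1, 0 < y ^ 2 * (1 - y) := fun y hy =>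
    mul_pos (pow_pos hy.1 2) (sub_pos.2 hy.2)
  let f : ℝ → ℝ := fun y => g y / (y ^ 2 * (1 - y))
  have hfM : ∀ y ∈ Ioc (0 : ℝ) 1, |f y| ≤ |M| := by
    intro y hy
    rcases hy.2.eq_or_lt with rfl | hy1
    · simp [f]
    · have hy' := hweight y ⟨hy.1, hy1⟩
      rw [abs_div, abs_of_pos hy', div_le_iff₀ hy']
      exact (hM y hy).trans (by gcongr; exact le_abs_self M)
  have hf : ∀ᵐ y ∂volume.restrict (Ioc (0 : ℝ) 1), ContinuousAt f y := by
    filter_upwards [hg, ae_restrict_mem measurableSet_Ioc,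
      ae_restrict_of_ae (Measure.ae_ne volume (1 : ℝ))] with y hgy hy hy1
    exact hgy.div (by fun_prop) (hweight y ⟨hy.1, hy.2.lt_of_ne hy1⟩).ne'
  refine (tendsto_abelMean_sq_mul_one_sub_mul hα hx h hfM hf).congr' ?_
  filter_upwards [Ioo_mem_nhdsLT zero_lt_one] with r hr
  simp only [abelMean]
  congr! 4 with n
  have hpow : 0 < r ^ n := pow_pos hr.1 n
  rcases (pow_le_one₀ (n := n) hr.1.le hr.2.le).eq_or_lt with hn | hn
  · have hg1 : g 1 = 0 := by simpa using hM 1 (right_mem_Ioc.2 zero_lt_one)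
    rw [hn, hg1]
    ring
  · exact mul_div_cancel₀ _ (hweight _ ⟨hpow, hn⟩).ne'

lemma abs_indicator_Ici_sub_sq_le {a y : ℝ} (ha : a ∈ Ioo (0 : ℝ) 1) (hy : y ∈ Ioc (0 : ℝ) 1) :
    |(Ici a).indicator 1 y - y ^ 2| ≤ ((1 - a)⁻¹ + 2 * (a ^ 2)⁻¹) * (y ^ 2 * (1 - y)) := by
  have ha0 : 0 < a := ha.1
  have ha1 : 0 < 1 - a := sub_pos.2 ha.2
  have hy0 : 0 < y := hy.1
  have hy1 : 0 ≤ 1 - y := sub_nonneg.2 hy.2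
  rw [add_mul]
  rcases le_or_gt a y with hay | hya
  · rw [indicator_of_mem (mem_Ici.2 hay), Pi.one_apply, abs_of_nonneg (by nlinarith)]
    refine le_add_of_nonneg_of_le (by positivity) ?_
    calc 1 - y ^ 2 ≤ 2 * 1 * (1 - y) := by nlinarith
      _ ≤ 2 * ((a ^ 2)⁻¹ * y ^ 2) * (1 - y) := by
        gcongr
        rw [le_inv_mul_iff₀ (by positivity), mul_one]
        gcongr
      _ = 2 * (a ^ 2)⁻¹ * (y ^ 2 * (1 - y)) := by ring
  · rw [indicator_of_notMem (notMem_Ici.2 hya), zero_sub, abs_neg, abs_of_pos (by positivity)]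
    refine le_add_of_le_of_nonneg ?_ (by positivity)
    rw [le_inv_mul_iff₀ ha1, mul_comm]
    gcongr

lemma tendsto_abelMean_indicator_Ici (hα : 0 ≤ α)
    (hx : x =O[atTop] fun n : ℕ => (n : ℝ) ^ (α - 1))
    (h : Tendsto (abelMean α x id) (𝓝[<] 1) (𝓝 0)) {a : ℝ} (ha : a ∈ Ioo (0 : ℝ) 1) :
    Tendsto (abelMean α x ((Ici a).indicator 1)) (𝓝[<] 1) (𝓝 0) := by
  let g : ℝ → ℝ := fun y => (Ici a).indicator 1 y - y ^ 2
  let M : ℝ := (1 - a)⁻¹ + 2 * (a ^ 2)⁻¹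
  have hbound : ∀ y ∈ Ioc (0 : ℝ) 1, |g y| ≤ M * (y ^ 2 * (1 - y)) := fun y hy =>
    abs_indicator_Ici_sub_sq_le ha hy
  have hcont : ∀ᵐ y ∂volume.restrict (Ioc (0 : ℝ) 1), ContinuousAt g y := by
    filter_upwards [ae_restrict_of_ae (Measure.ae_ne volume a)] with y hy
    refine ContinuousAt.sub (continuousOn_const.continuousAt_indicator ?_) (by fun_prop)
    rwa [frontier_Ici, mem_singleton_iff]
  have hsum := (tendsto_abelMean_of_abs_le hα hx h hbound hcont).add
    (tendsto_abelMean_pow h two_ne_zero)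
  rw [smul_zero, add_zero] at hsum
  refine hsum.congr' ?_
  filter_upwards [Ioo_mem_nhdsLT zero_lt_one] with r hr
  have hg_summable : Summable fun n => g (r ^ n) • x n := by
    refine summable_smul_of_abs_le_mul (M := |M|) hx (fun y hy => ?_) hr
    calc |g y| ≤ y ^ 2 * (1 - y) * M := (hbound y hy).trans_eq (mul_comm _ _)
      _ ≤ |M| * y := (le_abs_self _).trans (abs_sq_mul_one_sub_mul_le hy le_rfl)
  have hsq_summable : Summable fun n => (r ^ n) ^ 2 • x n := by
    simpa only [sq, eval_X] using summable_mul_eval_smul hx X hr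
  rw [← abelMean_add g (fun y => y ^ 2) hg_summable hsq_summable]
  congr 1
  funext y
  exact sub_add_cancel _ _

end Karamata

section PartialSums

variable {E : Type*} [NormedAddCommGroup E] [NormedSpace ℝ E] {α : ℝ} {x : ℕ → E}

lemma tendsto_exp_neg_inv_natCast :
    Tendsto (fun n : ℕ => Real.exp (-(n : ℝ)⁻¹)) atTop (𝓝[<] 1) := by
  refine tendsto_nhdsWithin_iff.2 ⟨?_, ?_⟩
  · simpa using (tendsto_inv_atTop_nhds_zero_nat (𝕜 := ℝ)).neg.rexp
  · filter_upwards [eventually_gt_atTop 0] with n hn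
    exact Real.exp_lt_one_iff.2 (neg_neg_of_pos (by positivity))

lemma tendsto_natCast_mul_one_sub_exp_neg_inv :
    Tendsto (fun n : ℕ => (n : ℝ) * (1 - Real.exp (-(n : ℝ)⁻¹))) atTop (𝓝 1) := by
  have hslope := (Real.hasDerivAt_exp 0).tendsto_slope_zero
  have hinv : Tendsto (fun n : ℕ => -(n : ℝ)⁻¹) atTop (𝓝[≠] 0) := by
    refine tendsto_nhdsWithin_iff.2 ⟨?_, ?_⟩
    · simpa using (tendsto_inv_atTop_nhds_zero_nat (𝕜 := ℝ)).neg
    · filter_upwards [eventually_gt_atTop 0] with n hn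
      simpa using hn.ne'
  simpa [Function.comp_def, ← mul_neg] using hslope.comp hinv

lemma abelMean_indicator_Ici_exp_neg_one (α : ℝ) (x : ℕ → E) {N : ℕ} (hN : 0 < N) :
    abelMean α x ((Ici (Real.exp (-1))).indicator 1) (Real.exp (-(N : ℝ)⁻¹)) =
      (1 - Real.exp (-(N : ℝ)⁻¹)) ^ α • ∑ j ∈ Finset.range (N + 1), x j := by
  have hmem (n : ℕ) :
      Real.exp (-(N : ℝ)⁻¹) ^ n ∈ Ici (Real.exp (-1)) ↔ n ∈ Finset.range (N + 1) := by
    rw [mem_Ici, ← Real.exp_nat_mul, Real.exp_le_exp, mul_neg, neg_le_neg_iff, ← div_eq_mul_inv,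
      div_le_one (by positivity), Nat.cast_le, Finset.mem_range, Nat.lt_succ_iff]
  rw [abelMean, tsum_eq_sum (s := Finset.range (N + 1)) fun n hn => ?_]
  · congr 1
    refine Finset.sum_congr rfl fun n hn => ?_
    rw [indicator_of_mem ((hmem n).2 hn), Pi.one_apply, one_smul]
  · rw [indicator_of_notMem (mt (hmem n).1 hn), zero_smul]

lemma tendsto_rpow_neg_smul_sum_of_tendsto_abelMean_zero [CompleteSpace E] (hα : 0 ≤ α)
    (hx : x =O[atTop] fun n : ℕ => (n : ℝ) ^ (α - 1))
    (h : Tendsto (abelMean α x id) (𝓝[<] 1) (𝓝 0)) :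
    Tendsto (fun n : ℕ => (n : ℝ) ^ (-α) • ∑ j ∈ Finset.range (n + 1), x j) atTop (𝓝 0) := by
  have hmean := (tendsto_abelMean_indicator_Ici hα hx h (a := Real.exp (-1))
    ⟨Real.exp_pos _, Real.exp_lt_one_iff.2 (by norm_num)⟩).comp tendsto_exp_neg_inv_natCast
  have hscale := tendsto_natCast_mul_one_sub_exp_neg_inv.rpow_const (p := -α) (.inl one_ne_zero)
  have hprod := hscale.smul hmean
  rw [smul_zero] at hprod
  refine hprod.congr' ?_
  filter_upwards [eventually_gt_atTop 0] with n hn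
  have hpos : 0 < 1 - Real.exp (-(n : ℝ)⁻¹) :=
    sub_pos.2 (Real.exp_lt_one_iff.2 (neg_neg_of_pos (by positivity)))
  rw [Function.comp_apply, abelMean_indicator_Ici_exp_neg_one α x hn, smul_smul,
    Real.mul_rpow n.cast_nonneg hpos.le, mul_assoc, ← Real.rpow_add hpos, neg_add_cancel,
    Real.rpow_zero, mul_one]

end PartialSums

section Multichoose

lemma factorial_mul_multichoose {R : Type*} [CommSemiring R] [BinomialRing R] (a : R) (n : ℕ) :
    (n.factorial : R) * Ring.multichoose a n = ∏ i ∈ Finset.range n, (a + i) := by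
  rw [← nsmul_eq_mul, Ring.factorial_nsmul_multichoose_eq_ascPochhammer,
    ascPochhammer_smeval_eq_eval]
  induction n with
  | zero => simp
  | succ n ih => rw [ascPochhammer_succ_eval, ih, Finset.prod_range_succ]

lemma sum_range_succ_multichoose {R : Type*} [NonAssocSemiring R] [Pow R ℕ] [NatPowAssoc R]
    [BinomialRing R] (a : R) (n : ℕ) :
    ∑ j ∈ Finset.range (n + 1), Ring.multichoose a j = Ring.multichoose (a + 1) n := by
  induction n with
  | zero => simp
  | succ n ih => rw [Finset.sum_range_succ, ih, Ring.multichoose_succ_succ, add_comm]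

lemma hasSum_pow_mul_multichoose (a : ℝ) {r : ℝ} (hr : |r| < 1) :
    HasSum (fun n : ℕ => r ^ n * Ring.multichoose a n) ((1 - r) ^ a)⁻¹ := by
  have h := (Real.one_div_one_sub_rpow_hasFPowerSeriesOnBall_zero a).hasSum (y := r)
    (by simpa [enorm_eq_nnnorm, ← NNReal.coe_lt_coe] using hr)
  simpa [← Ring.multichoose_eq, mul_comm] using h

lemma tendsto_rpow_mul_multichoose {a : ℝ} (ha : 0 < a) :
    Tendsto (fun n : ℕ => (n : ℝ) ^ (1 - a) * Ring.multichoose a n) atTop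
      (𝓝 (Real.Gamma a)⁻¹) := by
  have hGamma := (Real.GammaSeq_tendsto_Gamma a).inv₀ (Real.Gamma_pos_of_pos ha).ne'
  have hratio : Tendsto (fun n : ℕ => (n : ℝ) / (n + a)) atTop (𝓝 1) :=
    tendsto_natCast_div_add_atTop a
  have hprod := hratio.mul hGamma
  rw [one_mul] at hprod
  refine hprod.congr' ?_
  filter_upwards [eventually_gt_atTop 0] with n hn
  have hn' : (0 : ℝ) < n := Nat.cast_pos.2 hn
  rw [Real.GammaSeq, Finset.prod_range_succ, ← factorial_mul_multichoose, Real.rpow_sub hn',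
    Real.rpow_one]
  field_simp
  ring

lemma isBigO_multichoose {α : ℝ} (hα : 0 ≤ α) :
    (fun n : ℕ => Ring.multichoose α n) =O[atTop] fun n : ℕ => (n : ℝ) ^ (α - 1) := by
  rcases hα.eq_or_lt with rfl | hα
  · refine .of_bound 0 ?_
    filter_upwards [eventually_gt_atTop 0] with n hn
    obtain ⟨k, rfl⟩ := Nat.exists_eq_succ_of_ne_zero hn.ne'
    simp [Ring.multichoose_zero_succ]
  · have h := (isBigO_refl (fun n : ℕ => (n : ℝ) ^ (α - 1)) atTop).mul
      ((tendsto_rpow_mul_multichoose hα).isBigO_one ℝ)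
    simp only [mul_one] at h
    refine h.congr' ?_ .rfl
    filter_upwards [eventually_gt_atTop 0] with n hn
    have hn' : (0 : ℝ) < n := Nat.cast_pos.2 hn
    rw [← mul_assoc, ← Real.rpow_add hn', sub_add_sub_cancel', sub_self, Real.rpow_zero, one_mul]

end Multichoose

lemma tendsto_abelMean_sub_multichoose {E : Type*} [NormedAddCommGroup E] [NormedSpace ℝ E]
    [CompleteSpace E] {x : ℕ → E} {α β : ℝ} (hx : x =O[atTop] fun n : ℕ => (n : ℝ) ^ β) {c : E}
    (h : Tendsto (abelMean α x id) (𝓝[<] 1) (𝓝 c)) :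
    Tendsto (abelMean α (fun n => x n - Ring.multichoose α n • c) id) (𝓝[<] 1) (𝓝 0) := by
  have hsub := h.sub_const c
  rw [sub_self] at hsub
  refine hsub.congr' ?_
  filter_upwards [Ioo_mem_nhdsLT zero_lt_one] with r hr
  have hmodel := (hasSum_pow_mul_multichoose α (abs_lt.2 ⟨by linarith [hr.1], hr.2⟩)).smul_const c
  have hpos : 0 < (1 - r) ^ α := Real.rpow_pos_of_pos (by linarith [hr.2]) α
  simp only [abelMean, id_eq, smul_sub, smul_smul]
  rw [(summable_norm_pow_smul hx hr).of_norm.tsum_sub hmodel.summable, hmodel.tsum_eq, smul_sub,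
    smul_smul, mul_inv_cancel₀ hpos.ne', one_smul]

theorem statement16_general {E : Type*} [NormedAddCommGroup E] [NormedSpace ℝ E] [CompleteSpace E]
    {x : ℕ → E} {α : ℝ} (hα : 0 ≤ α) (hx : x =O[atTop] fun n : ℕ => (n : ℝ) ^ (α - 1)) {c : E}
    (h : Tendsto (fun r : ℝ => (1 - r) ^ α • ∑' n : ℕ, r ^ n • x n) (𝓝[<] 1) (𝓝 c)) :
    Tendsto (fun n : ℕ => (n : ℝ) ^ (-α) • ∑ j ∈ Finset.range (n + 1), x j) atTop
      (𝓝 ((Real.Gamma (α + 1))⁻¹ • c)) := by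
  have hmodelO : (fun n => Ring.multichoose α n • c) =O[atTop] fun n : ℕ => (n : ℝ) ^ (α - 1) := by
    simpa using (isBigO_multichoose hα).smul (isBigO_const_one ℝ c atTop)
  have hzero := tendsto_rpow_neg_smul_sum_of_tendsto_abelMean_zero hα (hx.sub hmodelO)
    (tendsto_abelMean_sub_multichoose hx h)
  have hmodel := (tendsto_rpow_mul_multichoose (a := α + 1) (by positivity)).smul_const c
  have hsum := hzero.add hmodel
  rw [zero_add] at hsum
  refine hsum.congr fun n => ?_
  rw [Finset.sum_sub_distrib, ← Finset.sum_smul, sum_range_succ_multichoose, smul_sub, smul_smul,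
    sub_add_cancel_right, sub_add_cancel]

/-- Lemma `tauber` in the paper: a Tauberian theorem for complex-valued
sequences. -/
theorem statement16
    (x : ℕ → ℂ) (α : ℝ) (hα : 0 ≤ α)
    (hO : (fun n => x n) =O[atTop] fun n : ℕ => (n : ℝ) ^ (α - 1))
    (c : ℂ)
    (habel : Tendsto (fun r : ℝ =>
        ((((1 - r) ^ α : ℝ)) : ℂ) * ∑' n : ℕ, x n * (r : ℂ) ^ n)
      (nhdsWithin 1 (Set.Ioo (0:ℝ) 1)) (nhds c)) :
    Tendsto (fun n : ℕ => ((((n : ℝ) ^ (-α) : ℝ)) : ℂ) * ∑ j ∈ Finset.range (n + 1), x j)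
      atTop (nhds (c / ((Real.Gamma (α + 1) : ℝ) : ℂ))) := by
  rw [nhdsWithin_Ioo_eq_nhdsLT zero_lt_one] at habel
  simpa [div_eq_inv_mul] using statement16_general hα hO (c := c) (by simpa [mul_comm] using habel)
end
end
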